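/- arXiv:1510.06548 — 3 statements merged into one kernel-verified Lean document; each statement's English description precedes it below -/
import Mathlib

section
/- Let b : ℝ → ℝ be a C^∞ function with b(θ+2π) = b(θ) + 2π and b′(θ) > 0 for all θ, and set ψ(θ) = e^{ib(θ)}, with Fourier coefficients ψ̂(k) = (1/2π)∫₀^{2π}ψ(θ)e^{−ikθ}dθ. Then ∑_{k∈ℤ} |k|·|ψ̂(k)|² = 1 if and only if there exists a function Ψ : ℂ → ℂ that is continuous on the closed unit disc {|z| ≤ 1}, holomorphic on the open unit disc {|z| < 1}, maps the open unit disc bijectively onto itself, and satisfies Ψ(e^{iθ}) = ψ(θ) for all θ ∈ ℝ. -/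
open MeasureTheory Real

noncomputable section

/-- The `k`-th Fourier coefficient of a `2π`-periodic function `u : ℝ → ℂ`:
`û(k) = (1/2π) ∫₀^{2π} u(θ) e^{-ikθ} dθ`. -/
def fCoef (u : ℝ → ℂ) (k : ℤ) : ℂ :=
  (2 * Real.pi)⁻¹ * ∫ θ in (0:ℝ)..(2 * Real.pi), u θ * Complex.exp (-Complex.I * k * θ)

/-! Write `ψ = e^{ib}`. By Parseval, `∑ₖ |ψ̂(k)|² = 1`, while `∑ₖ k |ψ̂(k)|²` is the degree of `ψ`,
which is `1`. Hence `∑ₖ |k| |ψ̂(k)|² = 1` exactly when the negative Fourier coefficients vanish,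
i.e. when `ψ` is the boundary trace of a holomorphic function `F` on the disc.

Such an `F` is a Möbius transformation: composing it with the disc automorphism that takes `F 0`
to `0` gives a boundary trace of modulus `1` and degree `1` whose Fourier coefficients `cₖ` vanish
for `k ≤ 0`, so `∑ₖ (k - 1) |cₖ|² = 0` with nonnegative terms, and only `c₁` survives. -/

open Function Metric
open Complex (I)
open scoped ComplexConjugate

section FourierCoefficients

lemma circleMap_zero_one_eq_exp (θ : ℝ) : circleMap 0 1 θ = Complex.exp (I * θ) := by
  rw [circleMap_zero, Complex.ofReal_one, one_mul, mul_comm]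

lemma circleMap_zero_one_zpow (k : ℤ) (θ : ℝ) :
    circleMap 0 1 θ ^ k = Complex.exp (I * k * θ) := by
  rw [circleMap_zero_one_eq_exp, ← Complex.exp_int_mul]
  ring_nf

lemma fCoef_eq_integral_circleMap (u : ℝ → ℂ) (k : ℤ) :
    fCoef u k = (2 * π)⁻¹ * ∫ θ in 0..2 * π, u θ * circleMap 0 1 θ ^ (-k) := by
  simp only [fCoef, circleMap_zero_one_zpow, Int.cast_neg, neg_mul, mul_neg]

local instance fact_two_pi_pos : Fact (0 < 2 * π) := ⟨two_pi_pos⟩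

lemma fourier_coe_two_pi (k : ℤ) (θ : ℝ) :
    fourier k (θ : AddCircle (2 * π)) = circleMap 0 1 θ ^ k := by
  rw [fourier_coe_apply, circleMap_zero_one_zpow]
  push_cast
  field_simp

variable {u v : ℝ → ℂ}

/-- The continuous function on `ℝ / 2πℤ` induced by a continuous `2π`-periodic function on `ℝ`,
through which Mathlib's Fourier theory on `AddCircle` applies to `fCoef`. -/
def addCircleLift (hu : Continuous u) (hp : Periodic u (2 * π)) : C(AddCircle (2 * π), ℂ) :=
  ⟨hp.lift, continuous_coinduced_dom.mpr hu⟩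

lemma addCircleLift_coe (hu : Continuous u) (hp : Periodic u (2 * π)) (θ : ℝ) :
    addCircleLift hu hp (θ : AddCircle (2 * π)) = u θ := rfl

lemma fourierCoeff_addCircleLift (hu : Continuous u) (hp : Periodic u (2 * π)) (k : ℤ) :
    fourierCoeff (addCircleLift hu hp) k = fCoef u k := by
  rw [fourierCoeff_eq_intervalIntegral _ _ 0, fCoef_eq_integral_circleMap, zero_add, one_div,
    Complex.real_smul]
  simp only [fourier_coe_two_pi, addCircleLift_coe, smul_eq_mul, mul_comm]

lemma hasSum_conj_fCoef_mul_fCoef (hu : Continuous u) (hup : Periodic u (2 * π))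
    (hv : Continuous v) (hvp : Periodic v (2 * π)) :
    HasSum (fun k ↦ conj (fCoef u k) * fCoef v k)
      ((2 * π)⁻¹ * ∫ θ in 0..2 * π, v θ * conj (u θ)) := by
  let f := addCircleLift hu hup
  let g := addCircleLift hv hvp
  have parseval := fourierBasis.hasSum_inner_mul_inner
    (f.toLp 2 AddCircle.haarAddCircle ℂ) (g.toLp 2 AddCircle.haarAddCircle ℂ)
  simp only [← inner_conj_symm _ (fourierBasis _), ← fourierBasis.repr_apply_apply,
    fourierBasis_repr, fourierCoeff_toLp, ContinuousMap.inner_toLp] at parseval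
  have hint : ∫ x, g x * conj (f x) ∂AddCircle.haarAddCircle =
      (2 * π)⁻¹ * ∫ θ in 0..2 * π, v θ * conj (u θ) := by
    rw [AddCircle.integral_haarAddCircle, ← AddCircle.intervalIntegral_preimage (2 * π) 0,
      zero_add, Complex.real_smul]
    rfl
  rw [hint] at parseval
  simpa only [f, g, fourierCoeff_addCircleLift] using parseval

lemma hasSum_norm_sq_fCoef (hu : Continuous u) (hp : Periodic u (2 * π)) :
    HasSum (fun k ↦ ‖fCoef u k‖ ^ 2) ((2 * π)⁻¹ * ∫ θ in 0..2 * π, ‖u θ‖ ^ 2) := by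
  have parseval := hasSum_conj_fCoef_mul_fCoef hu hp hu hp
  simp only [Complex.conj_mul', Complex.mul_conj', ← Complex.ofReal_pow,
    intervalIntegral.integral_ofReal, ← Complex.ofReal_mul] at parseval
  exact Complex.hasSum_ofReal.1 parseval

lemma hasSum_fCoef_mul_circleMap_zpow (hu : Continuous u) (hp : Periodic u (2 * π))
    (hs : Summable (fCoef u)) (θ : ℝ) :
    HasSum (fun k ↦ fCoef u k * circleMap 0 1 θ ^ k) (u θ) := by
  have hcoef : fourierCoeff (addCircleLift hu hp) = fCoef u :=
    funext (fourierCoeff_addCircleLift hu hp)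
  have hseries := has_pointwise_sum_fourier_series_of_summable (hcoef ▸ hs)
    (θ : AddCircle (2 * π))
  simpa only [hcoef, fourier_coe_two_pi, addCircleLift_coe, smul_eq_mul] using hseries

lemma fCoef_deriv (hu : ContDiff ℝ 1 u) (hp : Periodic u (2 * π)) (k : ℤ) :
    fCoef (deriv u) k = I * k * fCoef u k := by
  have he (θ : ℝ) : HasDerivAt (fun θ : ℝ ↦ Complex.exp (-I * k * θ))
      (Complex.exp (-I * k * θ) * (-I * k)) θ := by
    simpa using ((hasDerivAt_id θ).ofReal_comp.const_mul (-I * k)).cexp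
  have hboundary : u (2 * π) * Complex.exp (-I * k * (2 * π : ℝ)) =
      u 0 * Complex.exp (-I * k * (0 : ℝ)) := by
    have hexp : Complex.exp (-I * k * (2 * π : ℝ)) = 1 :=
      Complex.exp_eq_one_iff.2 ⟨-k, by push_cast; ring⟩
    rw [hexp, ← zero_add (2 * π), hp 0]
    simp
  have by_parts := intervalIntegral.integral_deriv_mul_eq_sub (a := 0) (b := 2 * π)
    (fun θ _ ↦ (hu.differentiable one_ne_zero θ).hasDerivAt) (fun θ _ ↦ he θ)
    ((hu.continuous_deriv le_rfl).intervalIntegrable _ _)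
    (Continuous.intervalIntegrable (by fun_prop) _ _)
  have hdu := hu.continuous_deriv le_rfl
  have hcu := hu.continuous
  rw [hboundary, sub_self, intervalIntegral.integral_add
    (Continuous.intervalIntegrable (by fun_prop) _ _)
    (Continuous.intervalIntegrable (by fun_prop) _ _)] at by_parts
  simp only [← mul_assoc, intervalIntegral.integral_mul_const] at by_parts
  rw [fCoef, fCoef]
  linear_combination ((2 * π)⁻¹ : ℝ) * by_parts

lemma periodic_deriv (hp : Periodic u (2 * π)) : Periodic (deriv u) (2 * π) := fun θ ↦ by
  rw [← deriv_comp_add_const, hp.funext]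

lemma summable_sq_mul_norm_sq_fCoef (hu : ContDiff ℝ 1 u) (hp : Periodic u (2 * π)) :
    Summable fun k : ℤ ↦ (k : ℝ) ^ 2 * ‖fCoef u k‖ ^ 2 := by
  have hs := (hasSum_norm_sq_fCoef (hu.continuous_deriv le_rfl) (periodic_deriv hp)).summable
  simpa only [fCoef_deriv hu hp, norm_mul, Complex.norm_I, one_mul, Complex.norm_intCast, mul_pow,
    sq_abs] using hs

lemma summable_abs_mul_norm_sq_fCoef (hu : ContDiff ℝ 1 u) (hp : Periodic u (2 * π)) :
    Summable fun k : ℤ ↦ |(k : ℝ)| * ‖fCoef u k‖ ^ 2 := by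
  refine (summable_sq_mul_norm_sq_fCoef hu hp).of_nonneg_of_le (fun k ↦ by positivity) fun k ↦ ?_
  have : |(k : ℝ)| ≤ (k : ℝ) ^ 2 := by
    rw [← sq_abs]
    exact_mod_cast Int.le_self_sq |k|
  gcongr

lemma summable_fCoef (hu : ContDiff ℝ 1 u) (hp : Periodic u (2 * π)) : Summable (fCoef u) := by
  have hinv : Summable fun k : ℤ ↦ 1 / (k : ℝ) ^ 2 :=
    Real.summable_one_div_int_pow.2 one_lt_two
  refine ((summable_sq_mul_norm_sq_fCoef hu hp).add hinv).of_norm_bounded_eventually ?_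
  filter_upwards [(Set.finite_singleton (0 : ℤ)).compl_mem_cofinite] with k hk
  have hk : (k : ℝ) ≠ 0 := Int.cast_ne_zero.2 hk
  have amgm := two_mul_le_add_sq (|(k : ℝ)| * ‖fCoef u k‖) (1 / |(k : ℝ)|)
  have hcancel : |(k : ℝ)| * ‖fCoef u k‖ * (1 / |(k : ℝ)|) = ‖fCoef u k‖ := by
    field_simp
  rw [mul_assoc, hcancel, mul_pow, div_pow, one_pow, sq_abs] at amgm
  linarith [norm_nonneg (fCoef u k)]

lemma hasSum_int_mul_norm_sq_fCoef (hu : ContDiff ℝ 1 u) (hp : Periodic u (2 * π)) :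
    HasSum (fun k : ℤ ↦ (k * ‖fCoef u k‖ ^ 2 : ℂ))
      ((2 * π * I)⁻¹ * ∫ θ in 0..2 * π, deriv u θ * conj (u θ)) := by
  have parseval := (hasSum_conj_fCoef_mul_fCoef hu.continuous hp
    (hu.continuous_deriv le_rfl) (periodic_deriv hp)).mul_left I⁻¹
  have hterm (k : ℤ) :
      I⁻¹ * (conj (fCoef u k) * fCoef (deriv u) k) = k * ‖fCoef u k‖ ^ 2 := by
    rw [fCoef_deriv hu hp, ← Complex.conj_mul']
    field_simp
  rw [mul_inv_rev, mul_assoc]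
  simpa only [hterm, Complex.ofReal_inv, Complex.ofReal_mul, Complex.ofReal_ofNat] using parseval

end FourierCoefficients

section BoundaryValues

lemma fCoef_comp_circleMap_neg_natCast {F : ℂ → ℂ} (hF : DiffContOnCl ℂ F (ball 0 1)) (n : ℕ) :
    fCoef (F ∘ circleMap 0 1) (-n) = 0 ^ n * F 0 := by
  have hpow : DiffContOnCl ℂ (fun z : ℂ ↦ z ^ n) (ball 0 1) :=
    (differentiable_id.pow n).diffContOnCl
  have mean_value : circleAverage (fun z ↦ z ^ n * F z) 0 1 = 0 ^ n * F 0 :=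
    DiffContOnCl.circleAverage (by simpa only [abs_one, smul_eq_mul] using hpow.smul hF)
  rw [← mean_value, circleAverage_def, Complex.real_smul, fCoef_eq_integral_circleMap]
  simp only [neg_neg, zpow_natCast, comp_apply, mul_comm]

lemma exists_diffContOnCl_comp_circleMap_eq {u : ℝ → ℂ} (hu : Continuous u)
    (hp : Periodic u (2 * π)) (hs : Summable (fCoef u)) (hneg : ∀ k < 0, fCoef u k = 0) :
    ∃ F : ℂ → ℂ, DiffContOnCl ℂ F (ball 0 1) ∧ F ∘ circleMap 0 1 = u := by
  have hs' : Summable fun n : ℕ ↦ ‖fCoef u n‖ := hs.norm.comp_injective Nat.cast_injective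
  have hbound (n : ℕ) (z : ℂ) (hz : z ∈ closedBall 0 1) : ‖fCoef u n * z ^ n‖ ≤ ‖fCoef u n‖ := by
    rw [norm_mul, norm_pow]
    exact mul_le_of_le_one_right (norm_nonneg _)
      (pow_le_one₀ (norm_nonneg z) (mem_closedBall_zero_iff.1 hz))
  refine ⟨fun z ↦ ∑' n : ℕ, fCoef u n * z ^ n, ⟨?_, ?_⟩, funext fun θ ↦ ?_⟩
  · exact Complex.differentiableOn_tsum_of_summable_norm hs' (fun n ↦ by fun_prop) isOpen_ball
      fun n z hz ↦ hbound n z (ball_subset_closedBall hz)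
  · rw [closure_ball 0 one_ne_zero]
    exact continuousOn_tsum (fun n ↦ by fun_prop) hs' hbound
  · have hsupp : ∀ k ∉ Set.range ((↑) : ℕ → ℤ), fCoef u k * circleMap 0 1 θ ^ k = 0 := by
      intro k hk
      have hk : k < 0 := not_le.1 fun h ↦ hk ⟨k.toNat, Int.toNat_of_nonneg h⟩
      rw [hneg k hk, zero_mul]
    have hseries := (Nat.cast_injective.hasSum_iff hsupp).2
      (hasSum_fCoef_mul_circleMap_zpow hu hp hs θ)
    simpa only [comp_apply, zpow_natCast] using hseries.tsum_eq

lemma norm_le_of_norm_circleMap_le {F : ℂ → ℂ} {M : ℝ} (hF : DiffContOnCl ℂ F (ball 0 1))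
    (hM : ∀ θ, ‖F (circleMap 0 1 θ)‖ ≤ M) {z : ℂ} (hz : z ∈ closure (ball 0 1)) : ‖F z‖ ≤ M := by
  refine Complex.norm_le_of_forall_mem_frontier_norm_le isBounded_ball hF (fun w hw ↦ ?_) hz
  rw [frontier_ball 0 one_ne_zero, ← abs_one, ← range_circleMap] at hw
  obtain ⟨θ, rfl⟩ := hw
  exact hM θ

end BoundaryValues

section Degree

variable {b : ℝ → ℝ} {n : ℤ}

lemma contDiff_circleMap_comp (hb : ContDiff ℝ 1 b) : ContDiff ℝ 1 (circleMap 0 1 ∘ b) :=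
  (contDiff_circleMap 0 1).comp hb

lemma periodic_circleMap_comp (hper : ∀ θ, b (θ + 2 * π) = b θ + n * (2 * π)) :
    Periodic (circleMap 0 1 ∘ b) (2 * π) := fun θ ↦ by
  rw [comp_apply, hper, (periodic_circleMap 0 1).int_mul n, comp_apply]

lemma hasSum_norm_sq_fCoef_circleMap_comp (hb : Continuous b)
    (hper : ∀ θ, b (θ + 2 * π) = b θ + n * (2 * π)) :
    HasSum (fun k ↦ ‖fCoef (circleMap 0 1 ∘ b) k‖ ^ 2) 1 := by
  have parseval := hasSum_norm_sq_fCoef ((continuous_circleMap 0 1).comp hb)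
    (periodic_circleMap_comp hper)
  have hmean : (2 * π)⁻¹ * ∫ θ in 0..2 * π, ‖(circleMap 0 1 ∘ b) θ‖ ^ 2 = 1 := by
    simp only [comp_apply, norm_circleMap_zero, abs_one, one_pow, intervalIntegral.integral_const,
      sub_zero, smul_eq_mul, mul_one, inv_mul_cancel₀ two_pi_pos.ne']
  rwa [hmean] at parseval

lemma hasSum_int_mul_norm_sq_fCoef_circleMap_comp (hb : ContDiff ℝ 1 b)
    (hper : ∀ θ, b (θ + 2 * π) = b θ + n * (2 * π)) :
    HasSum (fun k : ℤ ↦ (k : ℝ) * ‖fCoef (circleMap 0 1 ∘ b) k‖ ^ 2) n := by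
  have hderiv (θ : ℝ) : deriv (circleMap 0 1 ∘ b) θ * conj ((circleMap 0 1 ∘ b) θ) =
      I * (deriv b θ : ℝ) := by
    have hbθ := (hb.differentiable one_ne_zero θ).hasDerivAt
    have hunit : circleMap 0 1 (b θ) * conj (circleMap 0 1 (b θ)) = 1 := by
      simp [Complex.mul_conj']
    rw [((hasDerivAt_circleMap 0 1 (b θ)).scomp θ hbθ).deriv, comp_apply, Complex.real_smul]
    linear_combination (I * (deriv b θ : ℝ)) * hunit
  have hwinding : ∫ θ in 0..2 * π, deriv b θ = n * (2 * π) := by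
    rw [intervalIntegral.integral_deriv_eq_sub (fun θ _ ↦ hb.differentiable one_ne_zero θ)
      ((hb.continuous_deriv le_rfl).intervalIntegrable _ _), ← zero_add (2 * π), hper 0]
    ring
  have hsum := hasSum_int_mul_norm_sq_fCoef (contDiff_circleMap_comp hb)
    (periodic_circleMap_comp hper)
  simp only [hderiv, intervalIntegral.integral_const_mul, intervalIntegral.integral_ofReal,
    hwinding] at hsum
  have hpi : (π : ℂ) ≠ 0 := Complex.ofReal_ne_zero.2 pi_ne_zero
  have hdegree : (2 * π * I)⁻¹ * (I * ((n * (2 * π) : ℝ) : ℂ)) = ((n : ℝ) : ℂ) := by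
    push_cast
    field_simp
  rw [hdegree] at hsum
  exact Complex.hasSum_ofReal.1 (by exact_mod_cast hsum)

lemma tsum_abs_mul_norm_sq_fCoef_eq_iff (hb : ContDiff ℝ 1 b)
    (hper : ∀ θ, b (θ + 2 * π) = b θ + n * (2 * π)) :
    ∑' k : ℤ, |(k : ℝ)| * ‖fCoef (circleMap 0 1 ∘ b) k‖ ^ 2 = n ↔
      ∀ k < 0, fCoef (circleMap 0 1 ∘ b) k = 0 := by
  have henergy := (summable_abs_mul_norm_sq_fCoef (contDiff_circleMap_comp hb)
    (periodic_circleMap_comp hper)).hasSum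
  have hdefect := henergy.sub (hasSum_int_mul_norm_sq_fCoef_circleMap_comp hb hper)
  simp only [← sub_mul] at hdefect
  have hnonneg (k : ℤ) : 0 ≤ (|(k : ℝ)| - k) * ‖fCoef (circleMap 0 1 ∘ b) k‖ ^ 2 :=
    mul_nonneg (sub_nonneg.2 (le_abs_self _)) (sq_nonneg _)
  rw [← sub_eq_zero, ← hdefect.tsum_eq, ← hdefect.summable.hasSum_iff,
    hasSum_zero_iff_of_nonneg hnonneg, funext_iff]
  refine forall_congr' fun k ↦ ?_
  rw [Pi.zero_apply, mul_eq_zero, sub_eq_zero, abs_eq_self, sq_eq_zero_iff, norm_eq_zero,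
    Int.cast_nonneg_iff, ← not_lt, or_iff_not_imp_left, not_not]

lemma norm_fCoef_zero_lt_one (hb : ContDiff ℝ 1 b)
    (hper : ∀ θ, b (θ + 2 * π) = b θ + n * (2 * π)) (hn : n ≠ 0) :
    ‖fCoef (circleMap 0 1 ∘ b) 0‖ < 1 := by
  obtain ⟨k, hk, hck⟩ : ∃ k ≠ 0, fCoef (circleMap 0 1 ∘ b) k ≠ 0 := by
    by_contra! hzero
    have hterm (k : ℤ) : (k : ℝ) * ‖fCoef (circleMap 0 1 ∘ b) k‖ ^ 2 = 0 := by
      by_cases hk : k = 0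
      · simp [hk]
      · simp [hzero k hk]
    have hdegree := hasSum_int_mul_norm_sq_fCoef_circleMap_comp hb hper
    simp only [hterm] at hdegree
    exact hn (Int.cast_eq_zero.1 (hdegree.unique hasSum_zero))
  have hpair := sum_le_hasSum {0, k} (fun k _ ↦ sq_nonneg _)
    (hasSum_norm_sq_fCoef_circleMap_comp hb.continuous hper)
  rw [Finset.sum_pair hk.symm] at hpair
  have hpos : 0 < ‖fCoef (circleMap 0 1 ∘ b) k‖ ^ 2 := by positivity
  exact (sq_lt_one_iff₀ (norm_nonneg _)).1 (by linarith)

lemma exists_circleMap_comp_eq_mul_zpow (hb : ContDiff ℝ 1 b)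
    (hper : ∀ θ, b (θ + 2 * π) = b θ + n * (2 * π))
    (hlow : ∀ k < n, fCoef (circleMap 0 1 ∘ b) k = 0) :
    ∃ c : ℂ, ‖c‖ = 1 ∧ ∀ θ, circleMap 0 1 (b θ) = c * circleMap 0 1 θ ^ n := by
  have hdefect := (hasSum_int_mul_norm_sq_fCoef_circleMap_comp hb hper).sub
    ((hasSum_norm_sq_fCoef_circleMap_comp hb.continuous hper).mul_left (n : ℝ))
  simp only [mul_one, sub_self, ← sub_mul] at hdefect
  have hnonneg (k : ℤ) : 0 ≤ ((k : ℝ) - n) * ‖fCoef (circleMap 0 1 ∘ b) k‖ ^ 2 := by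
    rcases lt_or_ge k n with hk | hk
    · simp [hlow k hk]
    · exact mul_nonneg (sub_nonneg.2 (Int.cast_le.2 hk)) (sq_nonneg _)
  have hzero (k : ℤ) (hk : k ≠ n) : fCoef (circleMap 0 1 ∘ b) k = 0 := by
    have hterm := congrFun ((hasSum_zero_iff_of_nonneg hnonneg).1 hdefect) k
    simpa [sub_eq_zero, hk] using hterm
  have hseries (θ : ℝ) :
      circleMap 0 1 (b θ) = fCoef (circleMap 0 1 ∘ b) n * circleMap 0 1 θ ^ n :=
    (hasSum_fCoef_mul_circleMap_zpow (contDiff_circleMap_comp hb).continuous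
      (periodic_circleMap_comp hper) (summable_fCoef (contDiff_circleMap_comp hb)
      (periodic_circleMap_comp hper)) θ).unique
      (hasSum_single n fun k hk ↦ by rw [hzero k hk, zero_mul])
  refine ⟨fCoef (circleMap 0 1 ∘ b) n, ?_, hseries⟩
  simpa [norm_zpow] using (congrArg norm (hseries 0)).symm

end Degree

section Mobius

/-- The Möbius transformation `z ↦ (z - a) / (1 - a̅ z)`, an automorphism of the unit disc taking
`a` to `0` when `‖a‖ < 1`. -/
def mobius (a z : ℂ) : ℂ := (z - a) / (1 - conj a * z)

variable {a z : ℂ}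

lemma mobius_self (a : ℂ) : mobius a a = 0 := by
  rw [mobius, sub_self, zero_div]

lemma re_one_sub_conj_mul_pos (ha : ‖a‖ < 1) (hz : ‖z‖ ≤ 1) : 0 < (1 - conj a * z).re := by
  have hlt : ‖conj a * z‖ < 1 := by
    rw [norm_mul, RCLike.norm_conj]
    exact mul_lt_one_of_nonneg_of_lt_one_left (norm_nonneg a) ha hz
  rw [Complex.sub_re, Complex.one_re, sub_pos]
  exact (Complex.re_le_norm _).trans_lt hlt

lemma one_sub_conj_mul_ne_zero (ha : ‖a‖ < 1) (hz : ‖z‖ ≤ 1) : 1 - conj a * z ≠ 0 := fun h ↦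
  (re_one_sub_conj_mul_pos ha hz).ne' (by rw [h, Complex.zero_re])

lemma differentiableOn_mobius (ha : ‖a‖ < 1) : DifferentiableOn ℂ (mobius a) (closedBall 0 1) :=
  .div (by fun_prop) (by fun_prop) fun _ hz ↦
    one_sub_conj_mul_ne_zero ha (mem_closedBall_zero_iff.1 hz)

lemma norm_mobius_lt_one (ha : ‖a‖ < 1) (hz : ‖z‖ < 1) : ‖mobius a z‖ < 1 := by
  rw [mobius, norm_div, div_lt_one (norm_pos_iff.2 (one_sub_conj_mul_ne_zero ha hz.le))]
  have hid : ‖1 - conj a * z‖ ^ 2 - ‖z - a‖ ^ 2 = (1 - ‖a‖ ^ 2) * (1 - ‖z‖ ^ 2) := by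
    simp only [← Complex.normSq_eq_norm_sq, Complex.normSq_apply, Complex.sub_re, Complex.sub_im,
      Complex.mul_re, Complex.mul_im, Complex.conj_re, Complex.conj_im, Complex.one_re,
      Complex.one_im]
    ring
  have ha' : 0 < 1 - ‖a‖ ^ 2 := sub_pos.2 ((sq_lt_one_iff₀ (norm_nonneg a)).2 ha)
  have hz' : 0 < 1 - ‖z‖ ^ 2 := sub_pos.2 ((sq_lt_one_iff₀ (norm_nonneg z)).2 hz)
  exact lt_of_pow_lt_pow_left₀ 2 (norm_nonneg _) (by linarith [mul_pos ha' hz'])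

lemma mobius_neg_mobius (ha : ‖a‖ < 1) (hz : ‖z‖ ≤ 1) : mobius (-a) (mobius a z) = z := by
  have hz' := one_sub_conj_mul_ne_zero ha hz
  have ha' := one_sub_conj_mul_ne_zero ha ha.le
  have hnum : mobius a z + a = z * (1 - conj a * a) / (1 - conj a * z) := by
    rw [mobius, div_add' _ _ _ hz']
    ring
  have hden : 1 + conj a * mobius a z = (1 - conj a * a) / (1 - conj a * z) := by
    rw [mobius, ← mul_div_assoc, add_div' _ _ _ hz']
    ring
  rw [mobius, map_neg, neg_mul, sub_neg_eq_add, sub_neg_eq_add, hnum, hden,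
    div_div_div_cancel_right₀ hz', mul_div_cancel_right₀ _ ha']

lemma bijOn_mobius_ball (ha : ‖a‖ < 1) : Set.BijOn (mobius a) (ball 0 1) (ball 0 1) := by
  have hna : ‖-a‖ < 1 := by rwa [norm_neg]
  have hleft (c : ℂ) (hc : ‖c‖ < 1) : Set.LeftInvOn (mobius (-c)) (mobius c) (ball 0 1) :=
    fun z hz ↦ mobius_neg_mobius hc (mem_ball_zero_iff.1 hz).le
  have hmaps (c : ℂ) (hc : ‖c‖ < 1) : Set.MapsTo (mobius c) (ball 0 1) (ball 0 1) :=
    fun z hz ↦ mem_ball_zero_iff.2 (norm_mobius_lt_one hc (mem_ball_zero_iff.1 hz))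
  have hright : Set.RightInvOn (mobius (-a)) (mobius a) (ball 0 1) := by
    simpa only [neg_neg] using hleft (-a) hna
  exact Set.InvOn.bijOn ⟨hleft a ha, hright⟩ (hmaps a ha) (hmaps (-a) hna)

lemma bijOn_const_mul_ball {c : ℂ} (hc : ‖c‖ = 1) (r : ℝ) :
    Set.BijOn (c * ·) (ball 0 r) (ball 0 r) := by
  have hc0 : c ≠ 0 := norm_ne_zero_iff.1 (hc ▸ one_ne_zero)
  refine Set.InvOn.bijOn (f' := (c⁻¹ * ·)) ⟨fun z _ ↦ inv_mul_cancel_left₀ hc0 z,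
    fun z _ ↦ mul_inv_cancel_left₀ hc0 z⟩ ?_ ?_ <;>
  · intro z hz
    simpa [hc] using hz

/-- A continuous phase of the Möbius transformation `mobius a` on the unit circle: `mobius a` takes
`e^{is}` to `e^{iβ(s)}` with `β = mobiusPhase a`. The formula comes from
`mobius a z = z u̅ / u` for `‖z‖ = 1`, where `u = 1 - a̅ z` lies in the right half-plane. -/
def mobiusPhase (a : ℂ) (s : ℝ) : ℝ := s - 2 * (Complex.log (1 - conj a * circleMap 0 1 s)).im

lemma mobius_circleMap (ha : ‖a‖ < 1) (s : ℝ) :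
    mobius a (circleMap 0 1 s) = circleMap 0 1 (mobiusPhase a s) := by
  set z := circleMap 0 1 s with hz
  set u := 1 - conj a * z with hu
  have hu0 : u ≠ 0 := one_sub_conj_mul_ne_zero ha (by simp [hz])
  have hnum : z - a = z * conj u := by
    have hunit : z * conj z = 1 := by simp [hz, Complex.mul_conj']
    simp only [hu, map_sub, map_one, map_mul, Complex.conj_conj]
    linear_combination a * hunit
  have hquot : Complex.exp (-(2 * (Complex.log u).im * I)) = conj u / u := by
    conv_rhs => rw [← Complex.exp_log hu0, ← Complex.exp_conj, ← Complex.exp_sub]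
    rw [← neg_sub, Complex.sub_conj]
    push_cast
    rfl
  rw [mobius, ← hu, hnum, mul_div_assoc, ← hquot, hz, circleMap_zero_one_eq_exp,
    circleMap_zero_one_eq_exp, ← Complex.exp_add, mobiusPhase, ← hz, ← hu]
  push_cast
  ring_nf

lemma contDiff_mobiusPhase (ha : ‖a‖ < 1) {m : WithTop ℕ∞} : ContDiff ℝ m (mobiusPhase a) := by
  have harg : ContDiff ℝ m fun s ↦ 1 - conj a * circleMap 0 1 s :=
    contDiff_const.sub (contDiff_const.mul (contDiff_circleMap 0 1))
  have hlog : ContDiff ℝ m fun s ↦ Complex.log (1 - conj a * circleMap 0 1 s) :=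
    contDiff_iff_contDiffAt.2 fun s ↦ .comp (g := Complex.log) s
      ((Complex.contDiffAt_log (.inl (re_one_sub_conj_mul_pos ha (by simp)))).restrict_scalars ℝ)
      harg.contDiffAt
  exact contDiff_id.sub (contDiff_const.mul (Complex.imCLM.contDiff.comp hlog))

lemma mobiusPhase_add_int_mul_two_pi (a : ℂ) (s : ℝ) (n : ℤ) :
    mobiusPhase a (s + n * (2 * π)) = mobiusPhase a s + n * (2 * π) := by
  rw [mobiusPhase, mobiusPhase, (periodic_circleMap 0 1).int_mul n]
  ring

end Mobius

lemma exists_mobius_comp_circleMap_eq_mul {F : ℂ → ℂ} {b : ℝ → ℝ}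
    (hF : DiffContOnCl ℂ F (ball 0 1)) (hF0 : ‖F 0‖ < 1) (hb : ContDiff ℝ 1 b)
    (hper : ∀ θ, b (θ + 2 * π) = b θ + 2 * π) (hFb : F ∘ circleMap 0 1 = circleMap 0 1 ∘ b) :
    ∃ c : ℂ, ‖c‖ = 1 ∧ ∀ θ, mobius (F 0) (circleMap 0 1 (b θ)) = c * circleMap 0 1 θ := by
  have hunit (θ : ℝ) : ‖F (circleMap 0 1 θ)‖ ≤ 1 := by
    rw [← comp_apply (f := F), hFb]
    simp
  have hmaps : Set.MapsTo F (closure (ball 0 1)) (closedBall 0 1) := fun z hz ↦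
    mem_closedBall_zero_iff.2 (norm_le_of_norm_circleMap_le hF hunit hz)
  have hG : DiffContOnCl ℂ (mobius (F 0) ∘ F) (ball 0 1) :=
    ⟨(differentiableOn_mobius hF0).comp hF.differentiableOn (hmaps.mono_left subset_closure),
      (differentiableOn_mobius hF0).continuousOn.comp hF.continuousOn hmaps⟩
  have hGb : (mobius (F 0) ∘ F) ∘ circleMap 0 1 = circleMap 0 1 ∘ (mobiusPhase (F 0) ∘ b) := by
    rw [comp_assoc, hFb]
    exact funext fun θ ↦ mobius_circleMap hF0 (b θ)
  have hphase (θ : ℝ) : (mobiusPhase (F 0) ∘ b) (θ + 2 * π) =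
      (mobiusPhase (F 0) ∘ b) θ + (1 : ℤ) * (2 * π) := by
    rw [comp_apply, hper, comp_apply, ← mobiusPhase_add_int_mul_two_pi, Int.cast_one, one_mul]
  have hlow (k : ℤ) (hk : k < 1) :
      fCoef (circleMap 0 1 ∘ (mobiusPhase (F 0) ∘ b)) k = 0 := by
    obtain ⟨n, rfl⟩ := Int.exists_eq_neg_ofNat (Int.lt_add_one_iff.1 hk)
    rw [← hGb, fCoef_comp_circleMap_neg_natCast hG, comp_apply, mobius_self, mul_zero]
  obtain ⟨c, hc, hrot⟩ :=
    exists_circleMap_comp_eq_mul_zpow ((contDiff_mobiusPhase hF0).comp hb) hphase hlow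
  refine ⟨c, hc, fun θ ↦ ?_⟩
  rw [mobius_circleMap hF0, ← zpow_one (circleMap 0 1 θ)]
  exact hrot θ

lemma exists_circleMap_comp_eq_mobius {b : ℝ → ℝ} (hb : ContDiff ℝ 1 b)
    (hper : ∀ θ, b (θ + 2 * π) = b θ + 2 * π)
    (hneg : ∀ k < 0, fCoef (circleMap 0 1 ∘ b) k = 0) :
    ∃ a c : ℂ, ‖a‖ < 1 ∧ ‖c‖ = 1 ∧
      ∀ θ, circleMap 0 1 (b θ) = mobius a (c * circleMap 0 1 θ) := by
  have hper' (θ : ℝ) : b (θ + 2 * π) = b θ + (1 : ℤ) * (2 * π) := by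
    rw [hper, Int.cast_one, one_mul]
  have hψ := contDiff_circleMap_comp hb
  have hψp := periodic_circleMap_comp hper'
  obtain ⟨F, hF, hFb⟩ :=
    exists_diffContOnCl_comp_circleMap_eq hψ.continuous hψp (summable_fCoef hψ hψp) hneg
  have hF0 : ‖F 0‖ < 1 := by
    have hmean := fCoef_comp_circleMap_neg_natCast hF 0
    rw [Nat.cast_zero, neg_zero, pow_zero, one_mul, hFb] at hmean
    exact hmean ▸ norm_fCoef_zero_lt_one hb hper' one_ne_zero
  obtain ⟨c, hc, hrot⟩ := exists_mobius_comp_circleMap_eq_mul hF hF0 hb hper hFb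
  refine ⟨-F 0, c, by rwa [norm_neg], hc, fun θ ↦ ?_⟩
  rw [← hrot, mobius_neg_mobius hF0 (by simp)]

theorem quadratic_form_eq_one_iff_conformal_general
    (b : ℝ → ℝ) (hb : ContDiff ℝ 1 b) (hper : ∀ θ, b (θ + 2 * π) = b θ + 2 * π)
    (ψ : ℝ → ℂ) (hψ : ∀ θ, ψ θ = Complex.exp (I * b θ)) :
    (∑' k : ℤ, |(k : ℝ)| * ‖fCoef ψ k‖ ^ 2 = 1) ↔
      ∃ Ψ : ℂ → ℂ, ContinuousOn Ψ (closedBall 0 1) ∧ DifferentiableOn ℂ Ψ (ball 0 1) ∧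
        Set.BijOn Ψ (ball 0 1) (ball 0 1) ∧ ∀ θ : ℝ, Ψ (Complex.exp (I * θ)) = ψ θ := by
  obtain rfl : ψ = circleMap 0 1 ∘ b :=
    funext fun θ ↦ (hψ θ).trans (circleMap_zero_one_eq_exp (b θ)).symm
  have henergy := tsum_abs_mul_norm_sq_fCoef_eq_iff (n := 1) hb (by simpa using hper)
  rw [Int.cast_one] at henergy
  simp only [henergy, ← circleMap_zero_one_eq_exp]
  constructor
  · intro hneg
    obtain ⟨a, c, ha, hc, hψ'⟩ := exists_circleMap_comp_eq_mobius hb hper hneg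
    have hmaps : Set.MapsTo (c * ·) (closedBall 0 1) (closedBall 0 1) := fun z hz ↦ by
      simpa [hc] using hz
    have hdiff : DifferentiableOn ℂ (mobius a ∘ (c * ·)) (closedBall 0 1) :=
      (differentiableOn_mobius ha).comp (by fun_prop) hmaps
    exact ⟨mobius a ∘ (c * ·), hdiff.continuousOn, hdiff.mono ball_subset_closedBall,
      (bijOn_mobius_ball ha).comp (bijOn_const_mul_ball hc 1), fun θ ↦ (hψ' θ).symm⟩
  · rintro ⟨Ψ, hcont, hdiff, -, hΨ⟩ k hk
    have hΨ' : DiffContOnCl ℂ Ψ (ball 0 1) :=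
      ⟨hdiff, hcont.mono closure_ball_subset_closedBall⟩
    obtain ⟨n, rfl⟩ := Int.exists_eq_neg_ofNat hk.le
    rw [← (funext hΨ : Ψ ∘ circleMap 0 1 = _), fCoef_comp_circleMap_neg_natCast hΨ',
      zero_pow (by omega), zero_mul]

/-- **Lemma 2.5 of the paper.** For an orientation-preserving circle diffeomorphism
`ψ = e^{ib}` (with `b(θ+2π) = b(θ) + 2π`, `b' > 0`), one has `∑ₖ |k| |ψ̂(k)|² = 1`
if and only if `ψ` is the boundary trace of a conformal transformation of the unit disc. -/
theorem quadratic_form_eq_one_iff_conformal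
    (b : ℝ → ℝ) (hb : ContDiff ℝ (⊤ : ℕ∞) b)
    (hper : ∀ θ, b (θ + 2 * Real.pi) = b θ + 2 * Real.pi)
    (hb' : ∀ θ, 0 < deriv b θ)
    (ψ : ℝ → ℂ) (hψ : ∀ θ, ψ θ = Complex.exp (Complex.I * b θ)) :
    (∑' k : ℤ, |(k : ℝ)| * ‖fCoef ψ k‖ ^ 2 = 1) ↔
      ∃ Ψ : ℂ → ℂ,
        ContinuousOn Ψ (Metric.closedBall (0 : ℂ) 1) ∧
        DifferentiableOn ℂ Ψ (Metric.ball (0 : ℂ) 1) ∧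
        Set.BijOn Ψ (Metric.ball (0 : ℂ) 1) (Metric.ball (0 : ℂ) 1) ∧
        ∀ θ : ℝ, Ψ (Complex.exp (Complex.I * θ)) = ψ θ :=
  quadratic_form_eq_one_iff_conformal_general b (hb.of_le (by exact_mod_cast le_top)) hper ψ hψ
end
end

section
/- Let b : ℝ → ℝ be a C^∞ function with b(θ+2π) = b(θ) + 2π and b′(θ) > 0 for all θ, and set ψ(θ) = e^{ib(θ)}, with Fourier coefficients ψ̂(k) = (1/2π)∫₀^{2π}ψ(θ)e^{−ikθ}dθ. Assume ψ̂(k) = 0 for all integers k < 0. Then the power series Ψ(z) = ∑_{k=0}^∞ ψ̂(k)·z^k converges absolutely and uniformly on the closed unit disc {|z| ≤ 1}, defines a function continuous on the closed unit disc and holomorphic on the open unit disc with boundary values Ψ(e^{iθ}) = ψ(θ) for all θ, and Ψ maps the open unit disc {|z| < 1} bijectively onto itself. -/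
open MeasureTheory Real

noncomputable section

open Filter

/-!
Write `b θ = θ + h θ` with `h` periodic, and let `h` be the real part on the unit circle of a
function `H` that is holomorphic in the disc and continuous up to the boundary. With
`E = exp (-I * H / 2)`, the identity `ψ = e^{iθ} e^{ih}` reads `Ψ * E = z * conj E` on the circle.
The left side has only frequencies `≥ 0` and the right side only frequencies `≤ 1`, so both are
affine in `z`. Hence `Ψ` is the quotient of the affine functions `Ψ * E` and `E`, which is an
automorphism of the disc because `E` has no zeros in the closed disc.
-/

open Set Metric
open scoped ComplexConjugate

section FourierCoefficients

theorem fCoef_eq_fourierCoeffOn (u : ℝ → ℂ) (k : ℤ) :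
    fCoef u k = fourierCoeffOn Real.two_pi_pos u k := by
  rw [fourierCoeffOn_eq_integral, fCoef, Complex.real_smul]
  congr 1
  · simp
  · refine intervalIntegral.integral_congr fun θ _ => ?_
    simp only [fourier_coe_apply, smul_eq_mul, mul_comm (u θ)]
    congr 2
    push_cast
    rw [sub_zero]
    field_simp

theorem fCoef_conj (u : ℝ → ℂ) (k : ℤ) :
    fCoef (fun θ => conj (u θ)) (-k) = conj (fCoef u k) := by
  simp only [fCoef, map_mul, ← intervalIntegral.intervalIntegral_conj, ← Complex.exp_conj, map_neg,
    Complex.conj_I, Complex.conj_ofReal, map_intCast, Int.cast_neg, neg_neg, neg_mul_neg]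

theorem fCoef_eq_fCoef_deriv_div {u : ℝ → ℂ} (hu : ContDiff ℝ 1 u) (hper : u (2 * π) = u 0)
    {k : ℤ} (hk : k ≠ 0) : fCoef u k = fCoef (deriv u) k / (Complex.I * k) := by
  have parts := fourierCoeffOn_of_hasDerivAt Real.two_pi_pos hk
    (fun x _ => (hu.differentiable one_ne_zero x).hasDerivAt)
    ((hu.continuous_deriv le_rfl).intervalIntegrable _ _)
  rw [fCoef_eq_fourierCoeffOn, fCoef_eq_fourierCoeffOn, parts, hper]
  have : (k : ℂ) ≠ 0 := Int.cast_ne_zero.2 hk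
  push_cast
  field_simp
  ring

theorem summable_norm_sq_fCoef {u : ℝ → ℂ} (hu : ContinuousOn u (Icc 0 (2 * π))) :
    Summable fun k => ‖fCoef u k‖ ^ 2 := by
  simp only [fCoef_eq_fourierCoeffOn]
  obtain ⟨C, hC⟩ := isCompact_Icc.exists_bound_of_continuousOn hu
  have hmeas : AEStronglyMeasurable u (volume.restrict (Ioc 0 (2 * π))) :=
    (hu.mono Ioc_subset_Icc_self).aestronglyMeasurable measurableSet_Ioc
  refine (hasSum_sq_fourierCoeffOn Real.two_pi_pos (MemLp.of_bound hmeas C ?_)).summable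
  exact (ae_restrict_mem measurableSet_Ioc).mono fun x hx => hC x (Ioc_subset_Icc_self hx)

theorem summable_norm_fCoef {u : ℝ → ℂ} (hu : ContDiff ℝ 1 u) (hper : u (2 * π) = u 0) :
    Summable fun k => ‖fCoef u k‖ := by
  have hsq : Summable fun k : ℤ => 1 / (k : ℝ) ^ 2 + ‖fCoef (deriv u) k‖ ^ 2 :=
    (Real.summable_one_div_int_pow.2 one_lt_two).add
      (summable_norm_sq_fCoef (hu.continuous_deriv le_rfl).continuousOn)
  refine .of_norm_bounded_eventually hsq ?_
  filter_upwards [(finite_singleton (0 : ℤ)).compl_mem_cofinite] with k hk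
  rw [norm_norm, fCoef_eq_fCoef_deriv_div hu hper hk, norm_div, norm_mul, Complex.norm_I, one_mul,
    Complex.norm_intCast, ← sq_abs (k : ℝ), ← one_div_pow]
  set s := 1 / |(k : ℝ)|
  set t := ‖fCoef (deriv u) k‖
  calc t / |(k : ℝ)| = s * t := by ring
    _ ≤ s ^ 2 + t ^ 2 := by nlinarith [sq_nonneg (s - t), sq_nonneg (s + t)]

theorem hasSum_fCoef {u : ℝ → ℂ} (hu : Continuous u) (hper : Function.Periodic u (2 * π))
    (hsum : Summable (fCoef u)) (θ : ℝ) :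
    HasSum (fun k : ℤ => fCoef u k * Complex.exp (Complex.I * θ) ^ k) (u θ) := by
  have : Fact (0 < 2 * π) := ⟨Real.two_pi_pos⟩
  let f : C(AddCircle (2 * π), ℂ) := ⟨hper.lift, continuous_coinduced_dom.2 hu⟩
  have hf (x : ℝ) : f x = u x := hper.lift_coe x
  have hcoeff : fourierCoeff f = fCoef u := by
    ext k
    rw [fCoef_eq_fourierCoeffOn, fourierCoeffOn_eq_integral, fourierCoeff_eq_intervalIntegral f k 0]
    simp only [hf, fourier_coe_apply, sub_zero, zero_add]
  have hfourier (k : ℤ) : fourier k (θ : AddCircle (2 * π)) = Complex.exp (Complex.I * θ) ^ k := by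
    rw [fourier_coe_apply, ← Complex.exp_int_mul]
    congr 1
    push_cast
    field_simp
  have := has_pointwise_sum_fourier_series_of_summable (hcoeff ▸ hsum) (θ : AddCircle (2 * π))
  simpa only [hcoeff, hf, hfourier, smul_eq_mul] using this

theorem hasSum_fCoef_nat {u : ℝ → ℂ} (hu : Continuous u) (hper : Function.Periodic u (2 * π))
    (hsum : Summable (fCoef u)) (hneg : ∀ k < 0, fCoef u k = 0) (θ : ℝ) :
    HasSum (fun k : ℕ => fCoef u k * Complex.exp (Complex.I * θ) ^ k) (u θ) := by
  have supp (k : ℤ) (hk : k ∉ range ((↑) : ℕ → ℤ)) :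
      fCoef u k * Complex.exp (Complex.I * θ) ^ k = 0 := by
    rw [hneg k (not_le.1 fun h => hk ⟨k.toNat, Int.toNat_of_nonneg h⟩), zero_mul]
  simpa only [Function.comp_def, zpow_natCast] using
    (Nat.cast_injective.hasSum_iff supp).2 (hasSum_fCoef hu hper hsum θ)

end FourierCoefficients

section PowerSeries

variable {c : ℕ → ℂ}

theorem norm_mul_pow_le_of_mem_closedBall {z : ℂ} (hz : z ∈ closedBall (0 : ℂ) 1) (a : ℂ) (k : ℕ) :
    ‖a * z ^ k‖ ≤ ‖a‖ := by
  rw [norm_mul, norm_pow]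
  exact mul_le_of_le_one_right (norm_nonneg _)
    (pow_le_one₀ (norm_nonneg _) (mem_closedBall_zero_iff.1 hz))

theorem tendstoUniformlyOn_powerSeries (hc : Summable fun k => ‖c k‖) :
    TendstoUniformlyOn (fun N z => ∑ k ∈ Finset.range N, c k * z ^ k)
      (fun z => ∑' k, c k * z ^ k) atTop (closedBall (0 : ℂ) 1) :=
  tendstoUniformlyOn_tsum_nat hc fun k _ hz => norm_mul_pow_le_of_mem_closedBall hz (c k) k

theorem diffContOnCl_powerSeries (hc : Summable fun k => ‖c k‖) :
    DiffContOnCl ℂ (fun z => ∑' k, c k * z ^ k) (ball (0 : ℂ) 1) :=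
  .mk_ball
    (Complex.differentiableOn_tsum_of_summable_norm hc (fun k => by fun_prop) isOpen_ball
      fun k _ hz => norm_mul_pow_le_of_mem_closedBall (ball_subset_closedBall hz) (c k) k)
    ((tendstoUniformlyOn_powerSeries hc).continuousOn (.of_forall fun N => by fun_prop))

end PowerSeries

theorem exists_diffContOnCl_re_eq {h : ℝ → ℝ} (hcont : Continuous h)
    (hper : Function.Periodic h (2 * π)) (hsum : Summable fun k => ‖fCoef (fun θ => h θ) k‖) :
    ∃ H : ℂ → ℂ, DiffContOnCl ℂ H (ball 0 1) ∧
      ∀ θ : ℝ, (H (Complex.exp (Complex.I * θ))).re = h θ := by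
  set a := fCoef fun θ => h θ
  have ha : Summable fun k : ℕ => ‖a k‖ := hsum.comp_injective Nat.cast_injective
  refine ⟨fun z => 2 * (∑' k : ℕ, a k * z ^ k) - a 0,
    ((diffContOnCl_powerSeries ha).const_smul (2 : ℂ)).sub_const (a 0), fun θ => ?_⟩
  set z := Complex.exp (Complex.I * θ) with hz
  have hsymm (k : ℕ) : a (-k) * z ^ (-k : ℤ) = conj (a k * z ^ k) := by
    have hconj : conj z = z⁻¹ := by
      rw [hz, ← Complex.exp_conj, ← Complex.exp_neg, map_mul, Complex.conj_I, Complex.conj_ofReal,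
        neg_mul]
    rw [map_mul, map_pow, hconj, zpow_neg, zpow_natCast, inv_pow, ← fCoef_conj]
    simp only [Complex.conj_ofReal, a]
  have hpow : Summable fun k : ℕ => a k * z ^ k :=
    .of_norm_bounded ha fun k => norm_mul_pow_le_of_mem_closedBall
      (mem_closedBall_zero_iff.2 (Complex.norm_exp_I_mul_ofReal θ).le) (a k) k
  have hfold := (hasSum_fCoef (u := fun θ => (h θ : ℂ)) (by fun_prop) (hper.comp ((↑) : ℝ → ℂ))
    hsum.of_norm θ).nat_add_neg
  simp only [zpow_natCast, zpow_zero, mul_one] at hfold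
  have hval : ∑' k : ℕ, a k * z ^ k + conj (∑' k : ℕ, a k * z ^ k) = h θ + a 0 := by
    have hadd := hpow.hasSum.add (Complex.hasSum_conj'.2 hpow.hasSum)
    simp only [← hsymm] at hadd
    exact hadd.unique hfold
  have hre := congrArg Complex.re hval
  simp only [Complex.add_re, Complex.conj_re, Complex.ofReal_re] at hre
  simp only [Complex.sub_re, Complex.mul_re, Complex.re_ofNat, Complex.im_ofNat, zero_mul, sub_zero]
  linarith

section MaximumPrinciple

variable {U : Set ℂ} {f g : ℂ → ℂ}

theorem im_nonneg_of_forall_mem_frontier (hU : Bornology.IsBounded U) (hf : DiffContOnCl ℂ f U)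
    (hfr : ∀ z ∈ frontier U, 0 ≤ (f z).im) {z : ℂ} (hz : z ∈ closure U) : 0 ≤ (f z).im := by
  have hnorm (w : ℂ) : ‖Complex.exp (Complex.I * f w)‖ ≤ 1 ↔ 0 ≤ (f w).im := by
    simp [Complex.norm_exp]
  have hexp : DiffContOnCl ℂ (fun w => Complex.exp (Complex.I * f w)) U :=
    Complex.differentiable_exp.comp_diffContOnCl (hf.const_smul Complex.I)
  exact (hnorm z).1 <| Complex.norm_le_of_forall_mem_frontier_norm_le hU hexp
    (fun w hw => (hnorm w).2 (hfr w hw)) hz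

theorem exists_eqOn_const_of_im_eq_zero_on_frontier (hU : Bornology.IsBounded U) (hUo : IsOpen U)
    (hUc : IsConnected U) (hf : DiffContOnCl ℂ f U) (hfr : ∀ z ∈ frontier U, (f z).im = 0) :
    ∃ c, EqOn f (fun _ => c) (closure U) := by
  have him (z : ℂ) (hz : z ∈ U) : (f z).im = 0 := by
    refine le_antisymm ?_ (im_nonneg_of_forall_mem_frontier hU hf (fun w hw => (hfr w hw).ge)
      (subset_closure hz))
    simpa using im_nonneg_of_forall_mem_frontier hU hf.neg (fun w hw => by simp [hfr w hw])
      (subset_closure hz)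
  obtain ⟨c, hc⟩ :=
    (hf.differentiableOn.analyticOnNhd hUo).eq_const_of_im_eq_const him hUo hUc
  exact ⟨c, EqOn.of_subset_closure hc hf.continuousOn continuousOn_const subset_closure le_rfl⟩

theorem exists_eqOn_const_of_eq_conj_on_frontier (hU : Bornology.IsBounded U) (hUo : IsOpen U)
    (hUc : IsConnected U) (hf : DiffContOnCl ℂ f U) (hg : DiffContOnCl ℂ g U)
    (hfg : ∀ z ∈ frontier U, f z = conj (g z)) : ∃ c, EqOn f (fun _ => c) (closure U) := by
  obtain ⟨s, hs⟩ := exists_eqOn_const_of_im_eq_zero_on_frontier hU hUo hUc (hf.add hg)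
    fun z hz => by simp [hfg z hz]
  obtain ⟨t, ht⟩ := exists_eqOn_const_of_im_eq_zero_on_frontier hU hUo hUc
    ((hf.sub hg).const_smul Complex.I) fun z hz => by simp [hfg z hz]
  refine ⟨(s - Complex.I * t) / 2, fun z hz => ?_⟩
  have hsum : f z + g z = s := hs hz
  have hdiff : Complex.I * (f z - g z) = t := ht hz
  linear_combination hsum / 2 - Complex.I / 2 * hdiff + (f z - g z) / 2 * Complex.I_mul_I

end MaximumPrinciple

theorem diffContOnCl_dslope {f : ℂ → ℂ} {U : Set ℂ} {a : ℂ} (hf : DiffContOnCl ℂ f U)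
    (ha : U ∈ nhds a) : DiffContOnCl ℂ (dslope f a) U :=
  ⟨(Complex.differentiableOn_dslope ha).2 hf.differentiableOn,
    (continuousOn_dslope (mem_of_superset ha subset_closure)).2
      ⟨hf.continuousOn, hf.differentiableAt' ha⟩⟩

theorem exists_affine_of_eq_mul_conj_on_sphere {F E : ℂ → ℂ} (hF : DiffContOnCl ℂ F (ball 0 1))
    (hE : DiffContOnCl ℂ E (ball 0 1)) (hFE : ∀ z ∈ sphere (0 : ℂ) 1, F z = z * conj (E z)) :
    ∃ α β : ℂ, ∀ z ∈ closedBall (0 : ℂ) 1, F z = α * z + β ∧ E z = conj β * z + conj α := by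
  set β := F 0
  -- Dividing by `z` turns the relation into `P = conj Q`, where `P` and `Q` are still holomorphic.
  let P := dslope F 0
  let Q := fun z => E z - conj β * z
  have hP : DiffContOnCl ℂ P (ball 0 1) := diffContOnCl_dslope hF (ball_mem_nhds 0 one_pos)
  have hQ : DiffContOnCl ℂ Q (ball 0 1) :=
    hE.sub (Differentiable.diffContOnCl (f := fun z => conj β * z) (by fun_prop))
  have hFP (z : ℂ) : F z = P z * z + β := by
    have := sub_smul_dslope F 0 z
    simp only [sub_zero, smul_eq_mul] at this
    linear_combination -this
  have hPQ (z : ℂ) (hz : z ∈ sphere 0 1) : P z = conj (Q z) := by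
    have hzz : z * conj z = 1 := by
      rw [Complex.mul_conj', mem_sphere_zero_iff_norm.1 hz]; norm_num
    have : F z = z * conj (E z) := hFE z hz
    simp only [Q, map_sub, map_mul, Complex.conj_conj]
    linear_combination conj z * (this - hFP z) - (P z - conj (E z)) * hzz
  have hcl : closure (ball (0 : ℂ) 1) = closedBall 0 1 := closure_ball _ one_ne_zero
  have hfr : frontier (ball (0 : ℂ) 1) = sphere 0 1 := frontier_ball _ one_ne_zero
  have hconn : IsConnected (ball (0 : ℂ) 1) :=
    (convex_ball 0 1).isConnected (nonempty_ball.2 one_pos)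
  obtain ⟨α, hα⟩ := exists_eqOn_const_of_eq_conj_on_frontier isBounded_ball isOpen_ball hconn
    hP hQ (hfr ▸ hPQ)
  obtain ⟨α', hα'⟩ := exists_eqOn_const_of_eq_conj_on_frontier isBounded_ball isOpen_ball hconn
    hQ hP (hfr ▸ fun z hz => by rw [hPQ z hz, Complex.conj_conj])
  rw [hcl] at hα hα'
  have hαα' : α' = conj α := by
    have h1 : (1 : ℂ) ∈ sphere (0 : ℂ) 1 := by simp
    have hP1 : P 1 = α := hα (sphere_subset_closedBall h1)
    have hQ1 : Q 1 = α' := hα' (sphere_subset_closedBall h1)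
    rw [← hP1, ← hQ1, hPQ 1 h1, Complex.conj_conj]
  refine ⟨α, β, fun z hz => ⟨by rw [hFP, hα hz], ?_⟩⟩
  have : E z - conj β * z = α' := hα' hz
  linear_combination this + hαα'

/-- The linear fractional transformation with matrix `!![α, β; conj β, conj α]`. For `‖β‖ < ‖α‖`
these are exactly the automorphisms of the unit disc. -/
def discMobius (α β z : ℂ) : ℂ := (α * z + β) / (conj β * z + conj α)

section DiscMobius

variable {α β z : ℂ}

theorem discMobius_denom_ne_zero (h : ‖β‖ < ‖α‖) (hz : ‖z‖ ≤ 1) : conj β * z + conj α ≠ 0 := by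
  intro h0
  have hnorm : ‖α‖ = ‖β‖ * ‖z‖ := by
    rw [← Complex.norm_conj α, eq_neg_of_add_eq_zero_right h0, norm_neg, norm_mul,
      Complex.norm_conj]
  nlinarith [norm_nonneg β]

theorem norm_lt_norm_of_forall_denom_ne_zero
    (h : ∀ z ∈ closedBall (0 : ℂ) 1, conj β * z + conj α ≠ 0) : ‖β‖ < ‖α‖ := by
  by_contra! hle
  have hα : conj α ≠ 0 := by simpa using h 0 (by simp)
  have hβ : conj β ≠ 0 := by
    rw [ne_eq, map_eq_zero, ← norm_eq_zero]
    have := norm_pos_iff.2 ((map_ne_zero _).1 hα)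
    linarith
  refine h (-(conj α / conj β)) ?_ (by field_simp; ring)
  rw [mem_closedBall_zero_iff, norm_neg, norm_div, Complex.norm_conj, Complex.norm_conj]
  exact div_le_one_of_le₀ hle (norm_nonneg β)

theorem norm_sq_discMobius_denom_sub (α β z : ℂ) :
    ‖conj β * z + conj α‖ ^ 2 - ‖α * z + β‖ ^ 2 = (‖α‖ ^ 2 - ‖β‖ ^ 2) * (1 - ‖z‖ ^ 2) := by
  simp only [Complex.sq_norm, Complex.normSq_apply, Complex.add_re, Complex.add_im,
    Complex.mul_re, Complex.mul_im, Complex.conj_re, Complex.conj_im]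
  ring

theorem mapsTo_discMobius (h : ‖β‖ < ‖α‖) : MapsTo (discMobius α β) (ball 0 1) (ball 0 1) := by
  intro z hz
  rw [mem_ball_zero_iff] at hz ⊢
  have hden := norm_pos_iff.2 (discMobius_denom_ne_zero h hz.le)
  rw [discMobius, norm_div, div_lt_one hden]
  refine lt_of_pow_lt_pow_left₀ 2 hden.le (sub_pos.1 ?_)
  rw [norm_sq_discMobius_denom_sub]
  have : ‖β‖ ^ 2 < ‖α‖ ^ 2 := by gcongr
  have : ‖z‖ ^ 2 < 1 := pow_lt_one₀ (norm_nonneg z) hz two_ne_zero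
  exact mul_pos (by linarith) (by linarith)

theorem discMobius_discMobius_conj_neg (h : ‖β‖ < ‖α‖) (hz : ‖z‖ < 1) :
    discMobius (conj α) (-β) (discMobius α β z) = z := by
  have hden := discMobius_denom_ne_zero h hz.le
  have hden' : conj (-β) * discMobius α β z + conj (conj α) ≠ 0 :=
    discMobius_denom_ne_zero (by simpa using h)
      (mem_ball_zero_iff.1 (mapsTo_discMobius h (mem_ball_zero_iff.2 hz))).le
  have hw : discMobius α β z * (conj β * z + conj α) = α * z + β := div_mul_cancel₀ _ hden
  rw [discMobius, div_eq_iff hden']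
  simp only [map_neg, Complex.conj_conj]
  linear_combination hw

theorem bijOn_discMobius (h : ‖β‖ < ‖α‖) : BijOn (discMobius α β) (ball 0 1) (ball 0 1) := by
  have h' : ‖-β‖ < ‖conj α‖ := by simpa using h
  refine InvOn.bijOn (f' := discMobius (conj α) (-β)) ⟨fun z hz => ?_, fun z hz => ?_⟩
    (mapsTo_discMobius h) (mapsTo_discMobius h')
  · exact discMobius_discMobius_conj_neg h (mem_ball_zero_iff.1 hz)
  · simpa using discMobius_discMobius_conj_neg h' (mem_ball_zero_iff.1 hz)

end DiscMobius

theorem exists_eqOn_discMobius {Ψ H : ℂ → ℂ} (hΨ : DiffContOnCl ℂ Ψ (ball 0 1))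
    (hH : DiffContOnCl ℂ H (ball 0 1))
    (hΨH : ∀ z ∈ sphere (0 : ℂ) 1, Ψ z = z * Complex.exp (Complex.I * (H z).re)) :
    ∃ α β : ℂ, ‖β‖ < ‖α‖ ∧ EqOn Ψ (discMobius α β) (closedBall 0 1) := by
  let E := fun z => Complex.exp (-Complex.I / 2 * H z)
  have hE : DiffContOnCl ℂ E (ball 0 1) :=
    Complex.differentiable_exp.comp_diffContOnCl (hH.const_smul (-Complex.I / 2))
  have hreflect (z : ℂ) (hz : z ∈ sphere (0 : ℂ) 1) : Ψ z * E z = z * conj (E z) := by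
    rw [hΨH z hz, mul_assoc, ← Complex.exp_add, ← Complex.exp_conj, Complex.re_eq_add_conj]
    congr 2
    simp only [map_mul, map_div₀, map_neg, Complex.conj_I, map_ofNat]
    ring
  obtain ⟨α, β, haff⟩ := exists_affine_of_eq_mul_conj_on_sphere (hΨ.smul hE) hE hreflect
  refine ⟨α, β, norm_lt_norm_of_forall_denom_ne_zero fun z hz => ?_, fun z hz => ?_⟩
  · exact (haff z hz).2 ▸ Complex.exp_ne_zero _
  · rw [discMobius, ← (haff z hz).1, ← (haff z hz).2]
    exact (mul_div_cancel_right₀ _ (Complex.exp_ne_zero _)).symm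

theorem bijOn_ball_of_boundary_lift {Ψ : ℂ → ℂ} (hΨ : DiffContOnCl ℂ Ψ (ball 0 1)) {b : ℝ → ℝ}
    (hb : ContDiff ℝ 1 b) (hper : ∀ θ, b (θ + 2 * π) = b θ + 2 * π)
    (hΨb : ∀ θ : ℝ, Ψ (Complex.exp (Complex.I * θ)) = Complex.exp (Complex.I * b θ)) :
    BijOn Ψ (ball 0 1) (ball 0 1) := by
  let h := fun θ => b θ - θ
  have hh : ContDiff ℝ 1 h := hb.sub contDiff_id
  have hhper : Function.Periodic h (2 * π) := fun θ => by simp only [h, hper]; ring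
  have hsum : Summable fun k => ‖fCoef (fun θ => h θ) k‖ :=
    summable_norm_fCoef (Complex.ofRealCLM.contDiff.comp hh) (by simpa using hhper 0)
  obtain ⟨H, hH, hHh⟩ := exists_diffContOnCl_re_eq hh.continuous hhper hsum
  obtain ⟨α, β, hαβ, hΨαβ⟩ := exists_eqOn_discMobius hΨ hH fun z hz => by
    obtain ⟨θ, rfl⟩ := (Complex.norm_eq_one_iff _).1 (mem_sphere_zero_iff_norm.1 hz)
    rw [mul_comm (θ : ℂ), hΨb, hHh, ← Complex.exp_add]
    simp only [h, Complex.ofReal_sub]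
    ring_nf
  exact (bijOn_discMobius hαβ).congr (hΨαβ.mono ball_subset_closedBall).symm

theorem holomorphic_extension_conformal_general
    (b : ℝ → ℝ) (hb : ContDiff ℝ 1 b) (hper : ∀ θ, b (θ + 2 * π) = b θ + 2 * π)
    (ψ : ℝ → ℂ) (hψ : ∀ θ, ψ θ = Complex.exp (Complex.I * b θ))
    (hneg : ∀ k : ℤ, k < 0 → fCoef ψ k = 0)
    (Ψ : ℂ → ℂ) (hΨ : ∀ z, Ψ z = ∑' k : ℕ, fCoef ψ (k : ℤ) * z ^ k) :
    Summable (fun k : ℕ => ‖fCoef ψ (k : ℤ)‖) ∧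
    TendstoUniformlyOn (fun N z => ∑ k ∈ Finset.range N, fCoef ψ (k : ℤ) * z ^ k) Ψ
      atTop (closedBall (0 : ℂ) 1) ∧
    ContinuousOn Ψ (closedBall (0 : ℂ) 1) ∧
    DifferentiableOn ℂ Ψ (ball (0 : ℂ) 1) ∧
    (∀ θ : ℝ, Ψ (Complex.exp (Complex.I * θ)) = ψ θ) ∧
    BijOn Ψ (ball (0 : ℂ) 1) (ball (0 : ℂ) 1) := by
  obtain rfl : Ψ = fun z => ∑' k : ℕ, fCoef ψ k * z ^ k := funext hΨ
  have hψsmooth : ContDiff ℝ 1 ψ := by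
    rw [funext hψ]
    exact (contDiff_const.mul (Complex.ofRealCLM.contDiff.comp hb)).cexp
  have hψper : Function.Periodic ψ (2 * π) := fun θ => by
    rw [hψ, hψ, hper, Complex.exp_eq_exp_iff_exists_int]
    exact ⟨1, by push_cast; ring⟩
  have hsumℤ : Summable fun k => ‖fCoef ψ k‖ :=
    summable_norm_fCoef hψsmooth (by simpa using hψper 0)
  have hsum : Summable fun k : ℕ => ‖fCoef ψ k‖ := hsumℤ.comp_injective Nat.cast_injective
  have hdisc := diffContOnCl_powerSeries hsum
  have hboundary (θ : ℝ) : ∑' k : ℕ, fCoef ψ k * Complex.exp (Complex.I * θ) ^ k = ψ θ :=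
    (hasSum_fCoef_nat hψsmooth.continuous hψper hsumℤ.of_norm hneg θ).tsum_eq
  exact ⟨hsum, tendstoUniformlyOn_powerSeries hsum, hdisc.continuousOn_ball, hdisc.differentiableOn,
    hboundary, bijOn_ball_of_boundary_lift hdisc hb hper fun θ => (hboundary θ).trans (hψ θ)⟩

/-- **Holomorphic extension step of Lemma 2.5.** If the orientation-preserving circle
diffeomorphism `ψ = e^{ib}` has vanishing negative Fourier coefficients, then the power
series `Ψ(z) = ∑_{k≥0} ψ̂(k) z^k` converges absolutely and uniformly on the closed unit
disc, defines a function continuous on the closed disc and holomorphic on the open disc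
with boundary values `ψ`, and `Ψ` maps the open disc bijectively onto itself. -/
theorem holomorphic_extension_conformal
    (b : ℝ → ℝ) (hb : ContDiff ℝ (⊤ : ℕ∞) b)
    (hper : ∀ θ, b (θ + 2 * Real.pi) = b θ + 2 * Real.pi)
    (hb' : ∀ θ, 0 < deriv b θ)
    (ψ : ℝ → ℂ) (hψ : ∀ θ, ψ θ = Complex.exp (Complex.I * b θ))
    (hneg : ∀ k : ℤ, k < 0 → fCoef ψ k = 0)
    (Ψ : ℂ → ℂ) (hΨ : ∀ z, Ψ z = ∑' k : ℕ, fCoef ψ (k : ℤ) * z ^ k) :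
    Summable (fun k : ℕ => ‖fCoef ψ (k : ℤ)‖) ∧
    TendstoUniformlyOn (fun N z => ∑ k ∈ Finset.range N, fCoef ψ (k : ℤ) * z ^ k) Ψ
      atTop (Metric.closedBall (0 : ℂ) 1) ∧
    ContinuousOn Ψ (Metric.closedBall (0 : ℂ) 1) ∧
    DifferentiableOn ℂ Ψ (Metric.ball (0 : ℂ) 1) ∧
    (∀ θ : ℝ, Ψ (Complex.exp (Complex.I * θ)) = ψ θ) ∧
    Set.BijOn Ψ (Metric.ball (0 : ℂ) 1) (Metric.ball (0 : ℂ) 1) := by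
  exact holomorphic_extension_conformal_general b (hb.of_le (mod_cast le_top)) hper ψ hψ hneg Ψ hΨ
end
end

section
/- Let a : ℝ → ℝ be a C^∞, 2π-periodic, strictly positive function and let k ≥ 1 be an integer. Then the series defining the zeta-invariant Z_k(a) converges absolutely, Z_k(a) is a real number, and Z_k(a) ≥ 0. -/
open MeasureTheory Real

noncomputable section

/-- `prodPoly m j n = n(n+j₁)(n+j₁+j₂)⋯(n+j₁+⋯+j_{m-1})`. -/
def prodPoly (m : ℕ) (j : Fin m → ℤ) (n : ℤ) : ℤ :=
  ∏ i : Fin m, (n + ∑ l ∈ Finset.Iio i, j l)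

/-- The coefficient `N_{j₁…j_m} = ∑ₙ (|n(n+j₁)⋯(n+j₁+⋯+j_{m-1})| - n(n+j₁)⋯(n+j₁+⋯+j_{m-1}))`;
only finitely many summands are nonzero. -/
def Ncoef (m : ℕ) (j : Fin m → ℤ) : ℝ :=
  ∑' n : ℤ, ((|prodPoly m j n| - prodPoly m j n : ℤ) : ℝ)

/-- A term of the series defining the zeta-invariant `Z_k(a)`:
`N_{j₁…j_{2k}} â(j₁)⋯â(j_{2k})` for `j₁+⋯+j_{2k} = 0`. -/
def zetaTerm (k : ℕ) (a : ℝ → ℝ) (j : {j : Fin (2 * k) → ℤ // ∑ i, j i = 0}) : ℂ :=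
  (Ncoef (2 * k) j.val : ℂ) * ∏ i, fCoef (fun θ => (a θ : ℂ)) (j.val i)

/-- The zeta-invariant `Z_k(a) = ∑_{j₁+⋯+j_{2k}=0} N_{j₁…j_{2k}} â(j₁)⋯â(j_{2k})`. -/
def ZetaInv (k : ℕ) (a : ℝ → ℝ) : ℂ :=
  ∑' j : {j : Fin (2 * k) → ℤ // ∑ i, j i = 0}, zetaTerm k a j

/-!
Choosing the partial sums `w₀, …, w_{2k-1}` of a starting point `n` and of the steps `jᵢ` as new
summation variables turns `Z_k(a)` into a sum over closed walks `w` on `ℤ`. Restricted to walks in a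
finite set `s ⊆ ℤ`, this sum is `tr (T|D|)^{2k} - tr (TD)^{2k}`, where `T = (â(y - x))_{x, y ∈ s}` is
positive semidefinite because `a ≥ 0`, and `D` is the diagonal matrix with entries `n ∈ s`.

Write `T = S*S`, `A = SDS*` and `B = S|D|S*`, so that `-B ≤ A ≤ B` and the difference of traces is
`tr B^{2k} - tr A^{2k}`. In an orthonormal eigenbasis of `A`, with eigenvalues `λᵢ`, one has
`|λᵢ| ≤ Bᵢᵢ`, and `Bᵢᵢ^{2k} ≤ (B^{2k})ᵢᵢ` by Jensen's inequality for the spectral measure of `B`;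
summing over `i` shows that the difference is nonnegative, and one lets `s` exhaust `ℤ`.

Absolute convergence holds because a summand with step sizes `|jᵢ|` vanishes unless
`|n| < ∑ |jᵢ|`, so it grows polynomially in the steps, while `â` decays rapidly.
-/

open scoped ComplexConjugate ComplexOrder

section TraceInequality

open Matrix
open scoped ComplexOrder MatrixOrder

variable {𝕜 ι : Type*} [RCLike 𝕜] [Fintype ι] [DecidableEq ι]

lemma isHermitian_pow_apply_self {A : Matrix ι ι 𝕜} (hA : A.IsHermitian) (p : ℕ) (i : ι) :
    (A ^ p) i i = ((∑ l, ‖(hA.eigenvectorUnitary : Matrix ι ι 𝕜) i l‖ ^ 2 *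
      hA.eigenvalues l ^ p : ℝ) : 𝕜) := by
  conv_lhs => rw [hA.spectral_theorem, ← map_pow, diagonal_pow, Unitary.conjStarAlgAut_apply,
    mul_apply]
  push_cast
  refine Finset.sum_congr rfl fun l _ => ?_
  rw [mul_diagonal, star_apply, mul_right_comm, RCLike.star_def, RCLike.mul_conj, Pi.pow_apply,
    Function.comp_apply]

lemma posSemidef_apply_self_pow_le {A : Matrix ι ι 𝕜} (hA : A.PosSemidef) (p : ℕ) (i : ι) :
    A i i ^ p ≤ (A ^ p) i i := by
  have hpow := isHermitian_pow_apply_self hA.1 (i := i)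
  set weight := fun l => ‖(hA.1.eigenvectorUnitary : Matrix ι ι 𝕜) i l‖ ^ 2
  have hweight : ∑ l, weight l = 1 := by
    have h := hpow 0
    simp only [pow_zero, one_apply_eq, mul_one] at h
    exact_mod_cast h.symm
  have hself := hpow 1
  simp only [pow_one] at hself
  rw [hpow, hself, ← RCLike.ofReal_pow, RCLike.ofReal_le_ofReal]
  exact Real.pow_arith_mean_le_arith_mean_pow _ _ _ (fun _ _ => by positivity) hweight
    (fun l _ => hA.eigenvalues_nonneg l) p

lemma trace_conjStarAlgAut (U : unitary (Matrix ι ι 𝕜)) (A : Matrix ι ι 𝕜) :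
    (Unitary.conjStarAlgAut 𝕜 _ U A).trace = A.trace := by
  rw [Unitary.conjStarAlgAut_apply, trace_mul_cycle, Unitary.coe_star_mul_self, one_mul]

lemma nonneg_of_le_of_neg_le {E : Type*} [AddCommGroup E] [PartialOrder E] [IsOrderedAddMonoid E]
    [Module ℝ E] [PosSMulMono ℝ E] {x y : E} (h : x ≤ y) (h' : -x ≤ y) : 0 ≤ y := by
  have hadd : 0 ≤ y + y := by simpa only [add_neg_cancel] using add_le_add h h'
  have hhalf : y = (2⁻¹ : ℝ) • (y + y) := by module
  rw [hhalf]
  exact smul_nonneg (by norm_num) hadd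

lemma trace_diagonal_pow_le {d : ι → ℝ} {B : Matrix ι ι 𝕜}
    (hd : diagonal (RCLike.ofReal ∘ d) ≤ B) (hd' : -diagonal (RCLike.ofReal ∘ d) ≤ B)
    {p : ℕ} (hp : Even p) :
    (diagonal (RCLike.ofReal ∘ d : ι → 𝕜) ^ p).trace ≤ (B ^ p).trace := by
  have habs (i : ι) : ((|d i| : ℝ) : 𝕜) ≤ B i i := by
    have h := (le_iff.1 hd).diag_nonneg (i := i)
    have h' := (le_iff.1 hd').diag_nonneg (i := i)
    simp only [Matrix.sub_apply, Matrix.neg_apply, diagonal_apply_eq, Function.comp_apply,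
      sub_nonneg] at h h'
    rcases abs_choice (d i) with hi | hi <;> rw [hi]
    · exact h
    · rwa [RCLike.ofReal_neg]
  rw [diagonal_pow, trace_diagonal]
  refine Finset.sum_le_sum fun i _ => ?_
  calc (RCLike.ofReal ∘ d : ι → 𝕜) i ^ p = ((|d i| : ℝ) : 𝕜) ^ p := by
        rw [Function.comp_apply, ← RCLike.ofReal_pow, ← RCLike.ofReal_pow, hp.pow_abs]
    _ ≤ B i i ^ p := pow_le_pow_left₀ (by simp) (habs i) p
    _ ≤ (B ^ p) i i :=
        posSemidef_apply_self_pow_le (nonneg_of_le_of_neg_le hd hd').posSemidef p i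

lemma trace_pow_le_trace_pow {A B : Matrix ι ι 𝕜} (hAB : A ≤ B) (hAB' : -A ≤ B)
    {p : ℕ} (hp : Even p) : (A ^ p).trace ≤ (B ^ p).trace := by
  have hB : IsSelfAdjoint B := (nonneg_of_le_of_neg_le hAB hAB').isSelfAdjoint
  have hA : A.IsHermitian := by
    have h : IsSelfAdjoint (B - (B - A)) := hB.sub (le_iff.1 hAB).1
    rwa [sub_sub_cancel] at h
  let φ := Unitary.conjStarAlgAut 𝕜 _ (star hA.eigenvectorUnitary)
  have hφA : φ A = diagonal (RCLike.ofReal ∘ hA.eigenvalues) :=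
    hA.conjStarAlgAut_star_eigenvectorUnitary
  calc (A ^ p).trace = (φ A ^ p).trace := by rw [← map_pow, trace_conjStarAlgAut]
    _ ≤ (φ B ^ p).trace := by
      rw [hφA]
      refine trace_diagonal_pow_le ?_ ?_ hp <;> rw [← hφA]
      · exact (map_le_map_iff φ).2 hAB
      · rw [← map_neg]
        exact (map_le_map_iff φ).2 hAB'
    _ = (B ^ p).trace := by rw [← map_pow, trace_conjStarAlgAut]

lemma trace_mul_pow_comm {R : Type*} [CommSemiring R] (X Y : Matrix ι ι R) (p : ℕ) :
    ((X * Y) ^ p).trace = ((Y * X) ^ p).trace := by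
  cases p with
  | zero => rw [pow_zero, pow_zero]
  | succ p =>
    rw [pow_succ, ← mul_assoc, mul_pow_mul, mul_assoc, trace_mul_comm, mul_assoc, ← pow_succ]

lemma conj_diagonal_le {d e : ι → ℝ} (h : d ≤ e) (S : Matrix ι ι 𝕜) :
    S * diagonal (RCLike.ofReal ∘ d) * star S ≤ S * diagonal (RCLike.ofReal ∘ e) * star S := by
  refine star_right_conjugate_le_conjugate ?_ S
  rw [le_iff, diagonal_sub, posSemidef_diagonal_iff]
  intro i
  simpa using h i

lemma trace_mul_diagonal_pow_le {T : Matrix ι ι 𝕜} (hT : T.PosSemidef) (d : ι → ℝ) {p : ℕ}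
    (hp : Even p) :
    ((T * diagonal (RCLike.ofReal ∘ d)) ^ p).trace ≤
      ((T * diagonal (RCLike.ofReal ∘ |d|)) ^ p).trace := by
  obtain ⟨S, rfl⟩ := CStarAlgebra.nonneg_iff_eq_star_mul_self.mp hT.nonneg
  rw [mul_assoc, mul_assoc, trace_mul_pow_comm, trace_mul_pow_comm (star S)]
  refine trace_pow_le_trace_pow (conj_diagonal_le (le_abs_self d) S) ?_ hp
  convert conj_diagonal_le (neg_le_abs d) S using 1
  rw [← neg_mul, ← mul_neg, diagonal_neg]
  congr
  ext
  simp

end TraceInequality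

section ClosedWalks

open Matrix

section Trace

variable {R ι : Type*} [CommSemiring R] [Fintype ι] [DecidableEq ι]

lemma pow_mulVec_eq_sum_walk (M : Matrix ι ι R) (v : ι → R) (p : ℕ) (x : ι) :
    ((M ^ p) *ᵥ v) x = ∑ w : Fin p → ι,
      (∏ i, M ((Fin.cons x w : Fin (p + 1) → ι) i.castSucc) (w i)) *
        v ((Fin.cons x w : Fin (p + 1) → ι) (Fin.last p)) := by
  induction p generalizing x with
  | zero => simp
  | succ p ih =>
    rw [pow_succ', ← mulVec_mulVec, ← (Fin.consEquiv fun _ : Fin (p + 1) => ι).sum_comp,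
      Fintype.sum_prod_type]
    refine Finset.sum_congr rfl fun y _ => ?_
    rw [ih, Finset.mul_sum]
    refine Finset.sum_congr rfl fun w _ => ?_
    simp [Fin.consEquiv, Fin.prod_univ_succ, mul_assoc, ← Fin.succ_last]

lemma trace_pow_eq_sum_closedWalk {m : ℕ} [NeZero m] (M : Matrix ι ι R) :
    (M ^ m).trace = ∑ w : Fin m → ι, ∏ i, M (w i) (w (i + 1)) := by
  obtain ⟨p, rfl⟩ := Nat.exists_eq_add_one_of_ne_zero (NeZero.ne m)
  have hdiag (x : ι) : (M ^ (p + 1)) x x = ((M ^ p) *ᵥ fun y => M y x) x := by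
    rw [pow_succ, mul_apply]
    rfl
  rw [← (Fin.consEquiv fun _ : Fin (p + 1) => ι).sum_comp, Fintype.sum_prod_type, trace]
  refine Finset.sum_congr rfl fun x _ => ?_
  rw [diag_apply, hdiag, pow_mulVec_eq_sum_walk]
  refine Finset.sum_congr rfl fun w _ => ?_
  simp [Fin.consEquiv, Fin.prod_univ_castSucc]

lemma trace_mul_diagonal_pow {m : ℕ} [NeZero m] (T : Matrix ι ι R) (d : ι → R) :
    ((T * diagonal d) ^ m).trace =
      ∑ w : Fin m → ι, (∏ i, d (w i)) * ∏ i, T (w i) (w (i + 1)) := by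
  rw [trace_pow_eq_sum_closedWalk]
  refine Finset.sum_congr rfl fun w _ => ?_
  simp only [mul_diagonal, Finset.prod_mul_distrib]
  rw [mul_comm, ← Equiv.prod_comp (Equiv.addRight (1 : Fin m)) fun i => d (w i)]
  rfl

end Trace

variable {G : Type*} [AddCommGroup G] {m : ℕ} [NeZero m]

lemma sum_Iio_zero (j : Fin m → G) : ∑ l ∈ Finset.Iio 0, j l = 0 :=
  Finset.sum_eq_zero fun l hl => absurd (Finset.mem_Iio.1 hl) (Fin.not_lt_zero l)

lemma sum_Iio_add_one {j : Fin m → G} (hj : ∑ i, j i = 0) (i : Fin m) :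
    ∑ l ∈ Finset.Iio (i + 1), j l = ∑ l ∈ Finset.Iio i, j l + j i := by
  rw [Finset.sum_Iio_add_eq_sum_Iic]
  obtain ⟨p, rfl⟩ := Nat.exists_eq_add_one_of_ne_zero (NeZero.ne m)
  induction i using Fin.lastCases with
  | last =>
    -- The addition on `Fin` is cyclic, so `Iio (i + 1)` is empty here.
    rw [Fin.last_add_one, sum_Iio_zero, ← hj]
    congr
    ext l
    simp [Fin.le_last]
  | cast i => rw [Fin.Iio_add_one_eq_Iic (by simp)]

lemma sum_increments_eq_zero (w : Fin m → G) : ∑ i, (w (i + 1) - w i) = 0 := by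
  rw [Finset.sum_sub_distrib, sub_eq_zero]
  exact Equiv.sum_comp (Equiv.addRight (1 : Fin m)) w

lemma sum_Iio_increments (w : Fin m → G) (i : Fin m) :
    ∑ l ∈ Finset.Iio i, (w (l + 1) - w l) = w i - w 0 := by
  obtain ⟨p, rfl⟩ := Nat.exists_eq_add_one_of_ne_zero (NeZero.ne m)
  induction i using Fin.induction with
  | zero => rw [sum_Iio_zero, sub_self]
  | succ i ih =>
    rw [← Fin.coeSucc_eq_succ, sum_Iio_add_one (sum_increments_eq_zero w), ih]
    abel

variable (G m) in
/-- A closed walk of length `m` in `G`, viewed as the family of its vertices, corresponds to its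
steps, which sum to zero, together with its starting point. -/
def closedWalkEquiv : {j : Fin m → G // ∑ i, j i = 0} × G ≃ (Fin m → G) where
  toFun x i := x.2 + ∑ l ∈ Finset.Iio i, x.1.val l
  invFun w := (⟨fun i => w (i + 1) - w i, sum_increments_eq_zero w⟩, w 0)
  left_inv x := by
    ext i
    · simp only [sum_Iio_add_one x.1.2]
      abel
    · simp only [sum_Iio_zero, add_zero]
  right_inv w := by
    ext i
    simp only [sum_Iio_increments, add_sub_cancel]

end ClosedWalks

section FourierCoefficients

lemma conj_fCoef (u : ℝ → ℂ) (j : ℤ) :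
    conj (fCoef u j) = fCoef (fun θ => conj (u θ)) (-j) := by
  rw [fCoef, fCoef, map_mul, ← intervalIntegral.intervalIntegral_conj, Complex.conj_ofReal]
  simp [← Complex.exp_conj]

lemma fCoef_of_hasDerivAt {u u' : ℝ → ℂ} (hu : ∀ θ, HasDerivAt u (u' θ) θ)
    (hu' : IntervalIntegrable u' volume 0 (2 * π)) (hper : u (2 * π) = u 0) (j : ℤ) :
    fCoef u' j = Complex.I * j * fCoef u j := by
  let e : ℝ → ℂ := fun θ => Complex.exp (-Complex.I * j * θ)
  have he (θ : ℝ) : HasDerivAt e (e θ * (-Complex.I * j)) θ := by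
    simpa [e] using ((Complex.ofRealCLM.hasDerivAt (x := θ)).const_mul (-Complex.I * (j : ℂ))).cexp
  have he_end : e (2 * π) = 1 := Complex.exp_eq_one_iff.2 ⟨-j, by push_cast; ring⟩
  have he_start : e 0 = 1 := by simp [e]
  have hparts := intervalIntegral.integral_mul_deriv_eq_deriv_mul (fun θ _ => hu θ)
    (fun θ _ => he θ) hu' (Continuous.intervalIntegrable (by fun_prop) 0 (2 * π))
  have hfactor : ∫ θ in 0..2 * π, u θ * (e θ * (-Complex.I * j)) =
      (-Complex.I * j) * ∫ θ in 0..2 * π, u θ * e θ := by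
    rw [← intervalIntegral.integral_const_mul]
    congr with θ
    ring
  rw [he_end, he_start, hper, sub_self, zero_sub, hfactor] at hparts
  change _ * ∫ θ in 0..2 * π, u' θ * e θ = _ * (_ * ∫ θ in 0..2 * π, u θ * e θ)
  linear_combination (((2 * π)⁻¹ : ℝ) : ℂ) * hparts

lemma norm_fCoef_le (u : ℝ → ℂ) (j : ℤ) :
    ‖fCoef u j‖ ≤ (2 * π)⁻¹ * ∫ θ in 0..2 * π, ‖u θ‖ := by
  have hexp (θ : ℝ) : ‖Complex.exp (-Complex.I * j * θ)‖ = 1 := by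
    simp [Complex.norm_exp]
  have hle := intervalIntegral.norm_integral_le_integral_norm (μ := volume) two_pi_pos.le
    (f := fun θ : ℝ => u θ * Complex.exp (-Complex.I * j * θ))
  simp only [norm_mul, hexp, mul_one] at hle
  rw [fCoef, norm_mul, Complex.norm_real, norm_of_nonneg (by positivity)]
  gcongr

lemma exists_pow_mul_norm_fCoef_le {p : ℕ} {u : ℝ → ℂ} (hu : ContDiff ℝ p u)
    (hper : Function.Periodic u (2 * π)) :
    ∃ C : ℝ, ∀ j : ℤ, (1 + |(j : ℝ)|) ^ p * ‖fCoef u j‖ ≤ C := by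
  induction p generalizing u with
  | zero => exact ⟨_, fun j => by simpa using norm_fCoef_le u j⟩
  | succ p ih =>
    have hper' : Function.Periodic (deriv u) (2 * π) := fun θ => by
      rw [← deriv_comp_add_const, hper.funext]
    have hdiff : Differentiable ℝ u := hu.differentiable (by simp)
    have hu' : ContDiff ℝ p (deriv u) := (contDiff_succ_iff_deriv.1 hu).2.2
    have hderiv (j : ℤ) : ‖fCoef (deriv u) j‖ = |(j : ℝ)| * ‖fCoef u j‖ := by
      rw [fCoef_of_hasDerivAt (fun θ => (hdiff θ).hasDerivAt)
        (hu'.continuous.intervalIntegrable _ _) (by simpa using hper 0)]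
      simp
    obtain ⟨C, hC⟩ := ih (hu.of_le (by simp)) hper
    obtain ⟨C', hC'⟩ := ih hu' hper'
    refine ⟨C + C', fun j => ?_⟩
    calc (1 + |(j : ℝ)|) ^ (p + 1) * ‖fCoef u j‖
        = (1 + |(j : ℝ)|) ^ p * ‖fCoef u j‖ + (1 + |(j : ℝ)|) ^ p * ‖fCoef (deriv u) j‖ := by
          rw [hderiv]
          ring
      _ ≤ C + C' := add_le_add (hC j) (hC' j)

lemma summable_int_one_add_abs_sq_inv : Summable fun n : ℤ => ((1 + |(n : ℝ)|) ^ 2)⁻¹ := by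
  have hnat : Summable fun n : ℕ => ((1 + (n : ℝ)) ^ 2)⁻¹ := by
    simpa [add_comm] using (summable_nat_add_iff 1).2 (Real.summable_nat_pow_inv.2 one_lt_two)
  exact .of_nat_of_neg (by simpa using hnat) (by simpa using hnat)

lemma summable_pow_mul_norm_fCoef {p : ℕ} {u : ℝ → ℂ} (hu : ContDiff ℝ (p + 2 : ℕ) u)
    (hper : Function.Periodic u (2 * π)) :
    Summable fun j : ℤ => (1 + |(j : ℝ)|) ^ p * ‖fCoef u j‖ := by
  obtain ⟨C, hC⟩ := exists_pow_mul_norm_fCoef_le hu hper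
  refine .of_nonneg_of_le (fun j => by positivity) (fun j => ?_)
    (summable_int_one_add_abs_sq_inv.mul_left C)
  rw [← div_eq_mul_inv, le_div_iff₀ (by positivity)]
  calc (1 + |(j : ℝ)|) ^ p * ‖fCoef u j‖ * (1 + |(j : ℝ)|) ^ 2
      = (1 + |(j : ℝ)|) ^ (p + 2) * ‖fCoef u j‖ := by ring
    _ ≤ C := hC j

end FourierCoefficients

section ToeplitzSections

open Matrix

/-- The finite section, with rows and columns indexed by `s`, of the Toeplitz matrix
`(c (y - x))_{x, y ∈ ℤ}`. When `c` is the sequence of Fourier coefficients of `a`, it is the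
compression of multiplication by `a` to the trigonometric polynomials with frequencies in `-s`. -/
def toeplitzSection (c : ℤ → ℂ) (s : Finset ℤ) : Matrix s s ℂ :=
  .of fun x y => c (y - x)

/-- Positive-definiteness of a sequence in the sense of Herglotz: all finite sections of its
Toeplitz matrix are positive semidefinite. -/
def IsPosDefSeq (c : ℤ → ℂ) : Prop :=
  ∀ s : Finset ℤ, (toeplitzSection c s).PosSemidef

/-- The trigonometric polynomial `∑ y ∈ s, v_y e^{-iyθ}`. -/
def trigPoly {s : Finset ℤ} (v : s → ℂ) (θ : ℝ) : ℂ :=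
  ∑ y, v y * Complex.exp (-Complex.I * (y : ℤ) * θ)

lemma normSq_trigPoly {s : Finset ℤ} (v : s → ℂ) (θ : ℝ) :
    (Complex.normSq (trigPoly v θ) : ℂ) =
      ∑ x, ∑ y, conj (v x) * v y * Complex.exp (-Complex.I * (y - x : ℤ) * θ) := by
  rw [Complex.normSq_eq_conj_mul_self, trigPoly, map_sum, Finset.sum_mul_sum]
  refine Finset.sum_congr rfl fun x _ => Finset.sum_congr rfl fun y _ => ?_
  rw [map_mul, ← Complex.exp_conj, mul_mul_mul_comm, ← Complex.exp_add]
  congr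
  simp only [map_neg, map_mul, Complex.conj_I, map_intCast, Complex.conj_ofReal, Int.cast_sub]
  ring

lemma star_dotProduct_toeplitzSection_mulVec {u : ℝ → ℂ}
    (hu : IntervalIntegrable u volume 0 (2 * π)) {s : Finset ℤ} (v : s → ℂ) :
    star v ⬝ᵥ (toeplitzSection (fCoef u) s *ᵥ v) =
      fCoef (fun θ => u θ * Complex.normSq (trigPoly v θ)) 0 := by
  have hint (x y : s) : IntervalIntegrable (fun θ : ℝ => conj (v x) * v y *
      (u θ * Complex.exp (-Complex.I * (y - x : ℤ) * θ))) volume 0 (2 * π) :=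
    (hu.mul_continuousOn (by fun_prop)).const_mul _
  have hint' (x : s) : IntervalIntegrable (fun θ : ℝ => ∑ y, conj (v x) * v y *
      (u θ * Complex.exp (-Complex.I * (y - x : ℤ) * θ))) volume 0 (2 * π) := by
    simpa only [Finset.sum_fn] using IntervalIntegrable.sum Finset.univ fun y _ => hint x y
  have hexpand (θ : ℝ) : u θ * Complex.normSq (trigPoly v θ) *
      Complex.exp (-Complex.I * (0 : ℤ) * θ) = ∑ x, ∑ y, conj (v x) * v y *
        (u θ * Complex.exp (-Complex.I * (y - x : ℤ) * θ)) := by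
    simp only [normSq_trigPoly, Int.cast_zero, mul_zero, zero_mul, Complex.exp_zero, mul_one,
      Finset.mul_sum, mul_left_comm]
  simp only [fCoef, hexpand]
  rw [intervalIntegral.integral_finsetSum fun x _ => hint' x, dotProduct, Finset.mul_sum]
  refine Finset.sum_congr rfl fun x _ => ?_
  rw [intervalIntegral.integral_finsetSum fun y _ => hint x y, mulVec, dotProduct, Finset.mul_sum,
    Finset.mul_sum]
  refine Finset.sum_congr rfl fun y _ => ?_
  rw [intervalIntegral.integral_const_mul, toeplitzSection, of_apply, fCoef, Pi.star_apply,
    RCLike.star_def]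
  ring

lemma fCoef_zero_nonneg {b : ℝ → ℝ} (hb : ∀ θ, 0 ≤ b θ) : 0 ≤ fCoef (fun θ => (b θ : ℂ)) 0 := by
  simp only [fCoef, Int.cast_zero, mul_zero, zero_mul, Complex.exp_zero, mul_one,
    intervalIntegral.integral_ofReal, ← Complex.ofReal_mul, Complex.zero_le_real]
  exact mul_nonneg (by positivity) (intervalIntegral.integral_nonneg two_pi_pos.le fun θ _ => hb θ)

lemma isPosDefSeq_fCoef {a : ℝ → ℝ} (ha : IntervalIntegrable a volume 0 (2 * π))
    (ha0 : ∀ θ, 0 ≤ a θ) : IsPosDefSeq (fCoef fun θ => (a θ : ℂ)) := by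
  refine fun s => .of_dotProduct_mulVec_nonneg ?_ fun v => ?_
  · ext x y
    simp only [toeplitzSection, conjTranspose_apply, of_apply, RCLike.star_def, conj_fCoef,
      Complex.conj_ofReal, neg_sub]
  · have hint : IntervalIntegrable (fun θ => (a θ : ℂ)) volume 0 (2 * π) :=
      ⟨ha.1.ofReal, ha.2.ofReal⟩
    simp only [star_dotProduct_toeplitzSection_mulVec hint, ← Complex.ofReal_mul]
    exact fCoef_zero_nonneg fun θ => mul_nonneg (ha0 θ) (Complex.normSq_nonneg _)

end ToeplitzSections

section IncrementBounds

lemma one_add_sum_le_prod_one_add {R ι : Type*} [CommSemiring R] [PartialOrder R] [IsOrderedRing R]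
    (s : Finset ι) {f : ι → R} (hf : ∀ i ∈ s, 0 ≤ f i) :
    1 + ∑ i ∈ s, f i ≤ ∏ i ∈ s, (1 + f i) := by
  induction s using Finset.cons_induction with
  | empty => simp
  | cons i s hi ih =>
    rw [Finset.forall_mem_cons] at hf
    have hsum : 0 ≤ ∑ l ∈ s, f l := Finset.sum_nonneg hf.2
    rw [Finset.sum_cons, Finset.prod_cons]
    calc 1 + (f i + ∑ l ∈ s, f l) ≤ 1 + (f i + ∑ l ∈ s, f l) + f i * ∑ l ∈ s, f l :=
          le_add_of_nonneg_right (mul_nonneg hf.1 hsum)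
      _ = (1 + f i) * (1 + ∑ l ∈ s, f l) := by ring
      _ ≤ (1 + f i) * ∏ l ∈ s, (1 + f l) :=
          mul_le_mul_of_nonneg_left (ih hf.2) (add_nonneg zero_le_one hf.1)

lemma summable_prod_apply {α : Type*} {f : α → ℝ} (hf : ∀ a, 0 ≤ f a) (hs : Summable f) (m : ℕ) :
    Summable fun w : Fin m → α => ∏ i, f (w i) := by
  induction m with
  | zero => exact (hasSum_fintype _).summable
  | succ m ih =>
    rw [← (Fin.consEquiv fun _ : Fin (m + 1) => α).summable_iff]
    refine (hs.mul_of_nonneg ih hf fun w => Finset.prod_nonneg fun i _ => hf _).congr fun x => ?_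
    simp [Fin.consEquiv, Fin.prod_univ_succ]

lemma abs_sum_Iio_le {G : Type*} [AddCommGroup G] [LinearOrder G] [IsOrderedAddMonoid G] {m : ℕ}
    (j : Fin m → G) (i : Fin m) :
    |∑ l ∈ Finset.Iio i, j l| ≤ ∑ l, |j l| :=
  (Finset.abs_sum_le_sum_abs _ _).trans
    (Finset.sum_le_sum_of_subset_of_nonneg (Finset.subset_univ _) fun _ _ _ => abs_nonneg _)

lemma prodPoly_nonneg {m : ℕ} (hm : Even m) {j : Fin m → ℤ} {n : ℤ} (h : ∑ i, |j i| ≤ |n|) :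
    0 ≤ prodPoly m j n := by
  have hsum (i : Fin m) := abs_le.1 ((abs_sum_Iio_le j i).trans h)
  rcases abs_choice n with hn | hn <;> rw [hn] at hsum
  · exact Finset.prod_nonneg fun i _ => by linarith [hsum i]
  · refine Finset.prod_nonneg_of_card_nonpos_even ?_
    rw [Finset.filter_true_of_mem fun i _ => by linarith [hsum i]]
    simpa using hm

lemma abs_prodPoly_le {m : ℕ} {j : Fin m → ℤ} {n : ℤ} (h : |n| ≤ ∑ i, |j i|) :
    |prodPoly m j n| ≤ (2 * ∑ i, |j i|) ^ m := by
  have hfactor (i : Fin m) : |n + ∑ l ∈ Finset.Iio i, j l| ≤ 2 * ∑ i, |j i| := by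
    linarith [abs_add_le n (∑ l ∈ Finset.Iio i, j l), abs_sum_Iio_le j i]
  calc |prodPoly m j n| = ∏ i, |n + ∑ l ∈ Finset.Iio i, j l| := Finset.abs_prod _ _
    _ ≤ ∏ _i : Fin m, 2 * ∑ i, |j i| :=
        Finset.prod_le_prod (fun _ _ => abs_nonneg _) fun i _ => hfactor i
    _ = (2 * ∑ i, |j i|) ^ m := Fin.prod_const _ _

lemma abs_prodPoly_sub_self_mul_le {m : ℕ} (hm : Even m) (j : Fin m → ℤ) (n : ℤ) :
    (|prodPoly m j n| - prodPoly m j n) * (1 + |n|) ^ 2 ≤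
      2 ^ (m + 1) * ∏ i, (1 + |j i|) ^ (m + 2) := by
  rcases le_total (∑ i, |j i|) |n| with h | h
  · rw [abs_of_nonneg (prodPoly_nonneg hm h), sub_self, zero_mul]
    positivity
  · have hP : |prodPoly m j n| - prodPoly m j n ≤ 2 * |prodPoly m j n| := by
      linarith [neg_abs_le (prodPoly m j n)]
    calc (|prodPoly m j n| - prodPoly m j n) * (1 + |n|) ^ 2
        ≤ 2 * (2 * ∑ i, |j i|) ^ m * (1 + ∑ i, |j i|) ^ 2 := by
          gcongr
          exact hP.trans (by gcongr; exact abs_prodPoly_le h)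
      _ ≤ 2 * (2 * (1 + ∑ i, |j i|)) ^ m * (1 + ∑ i, |j i|) ^ 2 := by gcongr; linarith
      _ = 2 ^ (m + 1) * (1 + ∑ i, |j i|) ^ (m + 2) := by rw [mul_pow]; ring
      _ ≤ 2 ^ (m + 1) * ∏ i, (1 + |j i|) ^ (m + 2) := by
        rw [Finset.prod_pow]
        gcongr
        exact one_add_sum_le_prod_one_add _ fun i _ => abs_nonneg _

end IncrementBounds

section WalkSums

open Filter Matrix

lemma sum_piFinset_const {ι α M : Type*} [Fintype ι] [DecidableEq ι] [AddCommMonoid M]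
    (s : Finset α) (f : (ι → α) → M) :
    ∑ w ∈ Fintype.piFinset fun _ : ι => s, f w = ∑ w : ι → s, f fun i => w i := by
  symm
  refine Finset.sum_nbij (fun w i => (w i : α)) (fun w _ => Fintype.mem_piFinset.2 fun i => (w i).2)
    (fun w _ w' _ h => funext fun i => Subtype.ext (congrFun h i)) (fun w hw => ?_) fun _ _ => rfl
  exact ⟨fun i => ⟨w i, Fintype.mem_piFinset.1 hw i⟩, Finset.mem_coe.2 (Finset.mem_univ _), rfl⟩

lemma tendsto_piFinset_atTop (ι α : Type*) [Fintype ι] [DecidableEq ι] :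
    Tendsto (fun s : Finset α => Fintype.piFinset fun _ : ι => s) atTop atTop := by
  classical
  refine tendsto_atTop_finset_of_monotone (fun s t hst => Fintype.piFinset_subset _ _ fun _ => hst)
    fun w => ⟨Finset.univ.image w, Fintype.mem_piFinset.2 fun i => ?_⟩
  exact Finset.mem_image_of_mem w (Finset.mem_univ i)

/-- The summand `(|w₀⋯w_{m-1}| - w₀⋯w_{m-1}) c(w₁ - w₀) c(w₂ - w₁)⋯c(w₀ - w_{m-1})` attached to a
closed walk `w` on `ℤ`. With `c` the Fourier coefficients of `a`, the terms of `Z_k(a)` are the sums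
of these over the translates of a walk. -/
def walkTerm (c : ℤ → ℂ) {m : ℕ} [NeZero m] (w : Fin m → ℤ) : ℂ :=
  ((|∏ i, w i| - ∏ i, w i : ℤ) : ℂ) * ∏ i, c (w (i + 1) - w i)

variable {c : ℤ → ℂ} {m : ℕ} [NeZero m]

lemma walkTerm_closedWalkEquiv (c : ℤ → ℂ) (x : {j : Fin m → ℤ // ∑ i, j i = 0} × ℤ) :
    walkTerm c (closedWalkEquiv ℤ m x) =
      ((|prodPoly m x.1.val x.2| - prodPoly m x.1.val x.2 : ℤ) : ℂ) * ∏ i, c (x.1.val i) := by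
  have hstep (i : Fin m) : closedWalkEquiv ℤ m x (i + 1) - closedWalkEquiv ℤ m x i = x.1.val i :=
    congrArg (fun y => y.1.val i) ((closedWalkEquiv ℤ m).symm_apply_apply x)
  simp only [walkTerm, hstep]
  rfl

lemma norm_walkTerm_closedWalkEquiv_le (hm : Even m) (c : ℤ → ℂ)
    (x : {j : Fin m → ℤ // ∑ i, j i = 0} × ℤ) :
    ‖walkTerm c (closedWalkEquiv ℤ m x)‖ ≤ 2 ^ (m + 1) *
      ((∏ i, (1 + |(x.1.val i : ℝ)|) ^ (m + 2) * ‖c (x.1.val i)‖) *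
        ((1 + |(x.2 : ℝ)|) ^ 2)⁻¹) := by
  have hbound := abs_prodPoly_sub_self_mul_le hm x.1.val x.2
  rw [walkTerm_closedWalkEquiv, norm_mul, norm_prod, Complex.norm_intCast,
    abs_of_nonneg (by exact_mod_cast sub_nonneg.2 (le_abs_self _)), Finset.prod_mul_distrib,
    ← mul_assoc, ← mul_assoc, ← div_eq_mul_inv, le_div_iff₀ (by positivity), mul_right_comm]
  exact mul_le_mul_of_nonneg_right (mod_cast hbound) (Finset.prod_nonneg fun i _ => norm_nonneg _)

lemma summable_walkTerm (hm : Even m)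
    (hc : Summable fun j : ℤ => (1 + |(j : ℝ)|) ^ (m + 2) * ‖c j‖) :
    Summable fun w : Fin m → ℤ => walkTerm c w := by
  have hsteps := (summable_prod_apply (fun j => by positivity) hc m).comp_injective
    (Subtype.val_injective (p := fun j : Fin m → ℤ => ∑ i, j i = 0))
  have hdom := hsteps.mul_of_nonneg summable_int_one_add_abs_sq_inv
    (fun j => Finset.prod_nonneg fun i _ => by positivity) fun n => by positivity
  rw [← (closedWalkEquiv ℤ m).summable_iff]
  exact .of_norm_bounded (hdom.mul_left (2 ^ (m + 1))) (norm_walkTerm_closedWalkEquiv_le hm c)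

lemma sum_piFinset_walkTerm (c : ℤ → ℂ) (s : Finset ℤ) :
    ∑ w ∈ Fintype.piFinset fun _ : Fin m => s, walkTerm c w =
      ((toeplitzSection c s * diagonal fun x : s => ((|(x : ℤ)| : ℤ) : ℂ)) ^ m).trace -
        ((toeplitzSection c s * diagonal fun x : s => ((x : ℤ) : ℂ)) ^ m).trace := by
  rw [trace_mul_diagonal_pow, trace_mul_diagonal_pow, ← Finset.sum_sub_distrib,
    sum_piFinset_const]
  refine Finset.sum_congr rfl fun w _ => ?_
  rw [← sub_mul, walkTerm, Finset.abs_prod]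
  push_cast
  rfl

lemma sum_piFinset_walkTerm_nonneg (hm : Even m) (hc : IsPosDefSeq c) (s : Finset ℤ) :
    0 ≤ ∑ w ∈ Fintype.piFinset fun _ : Fin m => s, walkTerm c w := by
  rw [sum_piFinset_walkTerm, sub_nonneg]
  simpa [Function.comp_def, Pi.abs_def, ← Int.cast_abs] using
    trace_mul_diagonal_pow_le (hc s) (fun x => ((x : ℤ) : ℝ)) hm

lemma tsum_walkTerm_nonneg (hm : Even m) (hpos : IsPosDefSeq c)
    (hc : Summable fun j : ℤ => (1 + |(j : ℝ)|) ^ (m + 2) * ‖c j‖) :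
    0 ≤ ∑' w : Fin m → ℤ, walkTerm c w :=
  ge_of_tendsto' ((summable_walkTerm hm hc).hasSum.comp (tendsto_piFinset_atTop (Fin m) ℤ))
    (sum_piFinset_walkTerm_nonneg hm hpos)

end WalkSums

section ZetaInvariants

lemma zetaTerm_eq_tsum_walkTerm (k : ℕ) [NeZero (2 * k)] (a : ℝ → ℝ)
    (j : {j : Fin (2 * k) → ℤ // ∑ i, j i = 0}) :
    zetaTerm k a j =
      ∑' n : ℤ, walkTerm (fCoef fun θ => (a θ : ℂ)) (closedWalkEquiv ℤ (2 * k) (j, n)) := by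
  simp only [walkTerm_closedWalkEquiv, tsum_mul_right, zetaTerm, Ncoef, Complex.ofReal_tsum,
    Complex.ofReal_intCast]

theorem zetaInv_nonneg_general
    (a : ℝ → ℝ) (k : ℕ) (hk : 1 ≤ k) (ha : ContDiff ℝ (2 * k + 4 : ℕ) a)
    (haper : Function.Periodic a (2 * π)) (ha0 : ∀ θ, 0 ≤ a θ) :
    Summable (fun j : {j : Fin (2 * k) → ℤ // ∑ i, j i = 0} => ‖zetaTerm k a j‖) ∧
    (ZetaInv k a).im = 0 ∧ 0 ≤ (ZetaInv k a).re := by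
  have : NeZero (2 * k) := ⟨by omega⟩
  have hcoef : Summable fun j : ℤ =>
      (1 + |(j : ℝ)|) ^ (2 * k + 2) * ‖fCoef (fun θ => (a θ : ℂ)) j‖ :=
    summable_pow_mul_norm_fCoef (Complex.ofRealCLM.contDiff.comp ha) fun θ =>
      congrArg Complex.ofReal (haper θ)
  have hposDef : IsPosDefSeq (fCoef fun θ => (a θ : ℂ)) :=
    isPosDefSeq_fCoef (ha.continuous.intervalIntegrable _ _) ha0
  have hwalks := (closedWalkEquiv ℤ (2 * k)).summable_iff.2
    (summable_walkTerm (even_two_mul k) hcoef)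
  have habs : Summable fun j => ‖zetaTerm k a j‖ := by
    simp only [zetaTerm_eq_tsum_walkTerm]
    exact hwalks.prod.norm
  have hzeta : 0 ≤ ZetaInv k a := by
    calc 0 ≤ ∑' w : Fin (2 * k) → ℤ, walkTerm (fCoef fun θ => (a θ : ℂ)) w :=
          tsum_walkTerm_nonneg (even_two_mul k) hposDef hcoef
      _ = ZetaInv k a := by
          simp only [ZetaInv, zetaTerm_eq_tsum_walkTerm]
          rw [← (closedWalkEquiv ℤ (2 * k)).tsum_eq]
          exact hwalks.tsum_prod
  exact ⟨habs, (Complex.nonneg_iff.1 hzeta).2.symm, (Complex.nonneg_iff.1 hzeta).1⟩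

end ZetaInvariants

/-- **Nonnegativity of zeta-invariants (inequality (3.1) of the paper).** For a smooth,
`2π`-periodic, positive function `a` and `k ≥ 1`, the series defining `Z_k(a)` converges
absolutely, and `Z_k(a)` is a nonnegative real number. -/
theorem zetaInv_nonneg
    (a : ℝ → ℝ) (ha : ContDiff ℝ (⊤ : ℕ∞) a) (haper : Function.Periodic a (2 * Real.pi))
    (hapos : ∀ θ, 0 < a θ) (k : ℕ) (hk : 1 ≤ k) :
    Summable (fun j : {j : Fin (2 * k) → ℤ // ∑ i, j i = 0} => ‖zetaTerm k a j‖) ∧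
    (ZetaInv k a).im = 0 ∧ 0 ≤ (ZetaInv k a).re :=
  zetaInv_nonneg_general a k hk (contDiff_infty.1 ha _) haper fun θ => (hapos θ).le
end
end
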